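/- Let V be a vertex operator algebra of class 𝒜. Then V has only finitely many inequivalent irreducible ℕ-gradable weak V-modules, and for any three irreducible V-modules W₁, W₂, W₃ the fusion rule dim I(W₃; W₁, W₂) is finite. In particular, both conclusions hold when V is regular. -/

import Mathlib

noncomputable section

/-- The generalized binomial coefficient `C(m, i)` for `m ∈ ℤ`, `i ∈ ℕ`,
as a complex number: `m(m-1)⋯(m-i+1)/i!`. -/
def cchoose (m : ℤ) (i : ℕ) : ℂ :=
  (∏ j ∈ Finset.range i, ((m : ℂ) - (j : ℂ))) / (Nat.factorial i : ℂ)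

/-- A vertex operator algebra `V = ⊕ₙ V₍ₙ₎` over `ℂ`.  The vertex operator map is
recorded through its modes `op u n v = uₙ v` (so `Y(u,x)v = Σₙ uₙv x^{-n-1}`), with
vacuum `one`, conformal vector `omega` (with `L(k) = ω_{k+1}`), central charge `cc`,
weight grading `wtSpace` with projections `proj`.  The Jacobi identity is recorded in
the equivalent form of the Borcherds identity on modes. -/
structure VOA where
  carrier : Type
  [grp : AddCommGroup carrier]
  [mdl : Module ℂ carrier]
  op : carrier → ℤ → carrier → carrier
  one : carrier
  omega : carrier
  wtSpace : ℤ → Submodule ℂ carrier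
  proj : ℤ → carrier → carrier
  cc : ℂ
  op_linear_left : ∀ (n : ℤ) (w : carrier), IsLinearMap ℂ fun u => op u n w
  op_linear_right : ∀ (u : carrier) (n : ℤ), IsLinearMap ℂ (op u n)
  trunc : ∀ u v : carrier, ∃ N : ℤ, ∀ n : ℤ, N ≤ n → op u n v = 0
  one_op : ∀ (n : ℤ) (v : carrier), op one n v = if n = -1 then v else 0
  create_nonneg : ∀ (v : carrier) (n : ℤ), 0 ≤ n → op v n one = 0
  create : ∀ v : carrier, op v (-1) one = v
  borcherds : ∀ (u v w : carrier) (l m n : ℤ),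
    (∑ᶠ i : ℕ, cchoose m i • op (op u (l + (i : ℤ)) v) (m + n - (i : ℤ)) w)
      = ∑ᶠ i : ℕ, ((-1 : ℂ) ^ i * cchoose l i) •
          (op u (l + m - (i : ℤ)) (op v (n + (i : ℤ)) w)
            - ((-1 : ℂ) ^ l) • op v (l + n - (i : ℤ)) (op u (m + (i : ℤ)) w))
  proj_linear : ∀ n : ℤ, IsLinearMap ℂ (proj n)
  proj_mem : ∀ (n : ℤ) (v : carrier), proj n v ∈ wtSpace n
  proj_eq : ∀ n : ℤ, ∀ v ∈ wtSpace n, proj n v = v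
  proj_ne : ∀ m n : ℤ, m ≠ n → ∀ v ∈ wtSpace m, proj n v = 0
  proj_finite : ∀ v : carrier, (Function.support fun n => proj n v).Finite
  proj_sum : ∀ v : carrier, (∑ᶠ n : ℤ, proj n v) = v
  fd : ∀ n : ℤ, FiniteDimensional ℂ (wtSpace n)
  lower_trunc : ∃ N : ℤ, ∀ n : ℤ, n < N → wtSpace n = ⊥
  one_wt : one ∈ wtSpace 0
  omega_wt : omega ∈ wtSpace 2
  op_wt : ∀ k m n : ℤ, ∀ u ∈ wtSpace k, ∀ v ∈ wtSpace m, op u n v ∈ wtSpace (k + m - n - 1)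
  L_zero : ∀ n : ℤ, ∀ v ∈ wtSpace n, op omega 1 v = (n : ℂ) • v
  L_neg_one : ∀ (u : carrier) (n : ℤ) (w : carrier),
    op (op omega 0 u) n w = (-(n : ℂ)) • op u (n - 1) w
  virasoro : ∀ (m n : ℤ) (v : carrier),
    op omega (m + 1) (op omega (n + 1) v) - op omega (n + 1) (op omega (m + 1) v)
      = ((m : ℂ) - (n : ℂ)) • op omega (m + n + 1) v
        + (if m + n = 0 then (((m : ℂ) ^ 3 - (m : ℂ)) / 12) * cc else 0) • v

attribute [instance] VOA.grp VOA.mdl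

namespace VOA

variable (V : VOA)

/-- The Virasoro operator `L(k) = ω_{k+1}`. -/
def L (k : ℤ) (v : V.carrier) : V.carrier := V.op V.omega (k + 1) v

/-- The positive-weight part `V₊ = ⊕_{n ≥ 1} V₍ₙ₎`. -/
def pos : Submodule ℂ V.carrier := ⨆ (n : ℤ) (_ : 1 ≤ n), V.wtSpace n

/-- Zhu's subspace `C₂(V) = span{u₋₂v : u, v ∈ V}`. -/
def C2 : Submodule ℂ V.carrier :=
  Submodule.span ℂ {x : V.carrier | ∃ u v : V.carrier, x = V.op u (-2) v}

/-- The subspace `C₁(V) = span(v₋₁V₊ (v ∈ V₊) together with L(-1)V)`. -/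
def C1 : Submodule ℂ V.carrier :=
  Submodule.span ℂ
    ({x : V.carrier | ∃ u ∈ V.pos, ∃ v ∈ V.pos, x = V.op u (-1) v}
      ∪ {x : V.carrier | ∃ v : V.carrier, x = V.op V.omega 0 v})

/-- Iterated application of modes: `iterApply [(u¹,n₁),…,(uʳ,n_r)] w = u¹_{n₁} ⋯ uʳ_{n_r} w`. -/
def iterApply : List (V.carrier × ℤ) → V.carrier → V.carrier
  | [], w => w
  | p :: l, w => V.op p.1 p.2 (iterApply l w)

/-- `U ⊆ V` generates `V` as a vertex operator algebra:  `V` is linearly spanned by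
the elements `u¹_{n₁} ⋯ uʳ_{n_r} 1` with `uⁱ ∈ U`, `n_i ∈ ℤ`. -/
def generates (U : Set V.carrier) : Prop :=
  Submodule.span ℂ {x : V.carrier | ∃ l : List (V.carrier × ℤ),
    (∀ p ∈ l, p.1 ∈ U) ∧ x = V.iterApply l V.one} = ⊤

/-- `V` is finitely generated as a vertex operator algebra. -/
def FinitelyGenerated : Prop := ∃ S : Finset V.carrier, V.generates ↑S

end VOA

/-- A weak `V`-module: all axioms of a module (truncation, vacuum, Jacobi identity in
Borcherds form) except those involving gradings. -/
structure WeakModule (V : VOA) where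
  carrier : Type
  [grp : AddCommGroup carrier]
  [mdl : Module ℂ carrier]
  op : V.carrier → ℤ → carrier → carrier
  op_linear_left : ∀ (n : ℤ) (w : carrier), IsLinearMap ℂ fun u => op u n w
  op_linear_right : ∀ (u : V.carrier) (n : ℤ), IsLinearMap ℂ (op u n)
  trunc : ∀ (u : V.carrier) (w : carrier), ∃ N : ℤ, ∀ n : ℤ, N ≤ n → op u n w = 0
  one_op : ∀ (n : ℤ) (w : carrier), op V.one n w = if n = -1 then w else 0
  borcherds : ∀ (u v : V.carrier) (w : carrier) (l m n : ℤ),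
    (∑ᶠ i : ℕ, cchoose m i • op (V.op u (l + (i : ℤ)) v) (m + n - (i : ℤ)) w)
      = ∑ᶠ i : ℕ, ((-1 : ℂ) ^ i * cchoose l i) •
          (op u (l + m - (i : ℤ)) (op v (n + (i : ℤ)) w)
            - ((-1 : ℂ) ^ l) • op v (l + n - (i : ℤ)) (op u (m + (i : ℤ)) w))

attribute [instance] WeakModule.grp WeakModule.mdl

namespace WeakModule

variable {V : VOA} (W : WeakModule V)

/-- `L(0)` acting on a weak module, as a linear map. -/
def L0 : W.carrier →ₗ[ℂ] W.carrier := IsLinearMap.mk' _ (W.op_linear_right V.omega 1)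

/-- The `L(0)`-eigenspace of eigenvalue `h`. -/
def eig (h : ℂ) : Submodule ℂ W.carrier :=
  LinearMap.ker (W.L0 - h • (LinearMap.id : W.carrier →ₗ[ℂ] W.carrier))

/-- The coefficient `v*ₙ` of the adjoint vertex operator
`⟨Y*(v,x)α, w⟩ = ⟨α, Y(e^{xL(1)}(-x^{-2})^{L(0)}v, x^{-1})w⟩` acting on the full dual
space: for `v` homogeneous of weight `h`,
`(v*ₙ α)(w) = (-1)^h Σ_{i≥0} (1/i!) α((L(1)^i v)_{2h-n-i-2} w)`, extended to general
`v` via the weight-space projections. -/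
def dmode (v : V.carrier) (n : ℤ) (α : W.carrier → ℂ) (w : W.carrier) : ℂ :=
  ∑ᶠ h : ℤ, ∑ᶠ i : ℕ,
    ((-1 : ℂ) ^ h / (Nat.factorial i : ℂ)) *
      α (W.op ((V.L 1)^[i] (V.proj h v)) (2 * h - n - (i : ℤ) - 2) w)

/-- `D(W) ⊆ W*`: the linear functionals `α` on `W` such that for every `v ∈ V`,
`Y*(v,x)α ∈ W*((x))`, i.e. `v*ₙ α = 0` for `n` sufficiently large. -/
def DW : Set (W.carrier → ℂ) :=
  {α | IsLinearMap ℂ α ∧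
    ∀ v : V.carrier, ∃ N : ℤ, ∀ n : ℤ, N ≤ n → ∀ w : W.carrier, W.dmode v n α w = 0}

/-- A subspace stable under all modes of all vertex operators, i.e. a `V`-submodule. -/
def IsStable (S : Submodule ℂ W.carrier) : Prop :=
  ∀ (v : V.carrier) (n : ℤ), ∀ m ∈ S, W.op v n m ∈ S

/-- An irreducible (nonzero, no proper nonzero stable subspaces) `V`-submodule. -/
def IsIrreducibleSub (S : Submodule ℂ W.carrier) : Prop :=
  S ≠ ⊥ ∧ W.IsStable S ∧
    ∀ T : Submodule ℂ W.carrier, W.IsStable T → T ≤ S → T = ⊥ ∨ T = S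

/-- A stable subspace which is an ordinary module: `L(0)` acts semisimply on it with
finite-dimensional eigenspaces, and for each `h` the eigenvalues `h + m` do not occur
for `m` a sufficiently negative integer. -/
def IsOrdinarySub (S : Submodule ℂ W.carrier) : Prop :=
  S ≤ (⨆ h : ℂ, W.eig h ⊓ S) ∧ (∀ h : ℂ, FiniteDimensional ℂ ↥(W.eig h ⊓ S)) ∧
    ∀ h : ℂ, ∃ N : ℤ, ∀ m : ℤ, m ≤ N → W.eig (h + (m : ℂ)) ⊓ S = ⊥

/-- The weak module `W` is irreducible. -/
def IsIrreducible : Prop :=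
  (⊥ : Submodule ℂ W.carrier) ≠ ⊤ ∧
    ∀ S : Submodule ℂ W.carrier, W.IsStable S → S = ⊥ ∨ S = ⊤

/-- `Cₙ(W) = span{v₋ₙw : v ∈ V, w ∈ W}`. -/
def Cn (n : ℤ) : Submodule ℂ W.carrier :=
  Submodule.span ℂ {x : W.carrier | ∃ (v : V.carrier) (w : W.carrier), x = W.op v (-n) w}

/-- `B(W) = span(u₋₁W (u ∈ V₊) together with v₀W (v homogeneous, wt v ≥ 2))`. -/
def BW : Submodule ℂ W.carrier :=
  Submodule.span ℂ
    ({x : W.carrier | ∃ v ∈ V.pos, ∃ w : W.carrier, x = W.op v (-1) w}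
      ∪ {x : W.carrier | ∃ k : ℤ, 2 ≤ k ∧ ∃ v ∈ V.wtSpace k, ∃ w : W.carrier, x = W.op v 0 w})

/-- Zhu's subspace `O(W) = span{Σ_{i≥0} C(wt v, i) v_{i-2} w}` so that `A(W) = W/O(W)`. -/
def OW : Submodule ℂ W.carrier :=
  Submodule.span ℂ
    {x : W.carrier | ∃ (k : ℤ) (v : V.carrier), v ∈ V.wtSpace k ∧
      ∃ w : W.carrier, x = ∑ᶠ i : ℕ, cchoose k i • W.op v ((i : ℤ) - 2) w}

/-- A subspace `T ⊇ O(W)` of `W` is closed under the Frenkel–Zhu left and right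
`A(V)`-actions `v * w = Σᵢ C(wt v, i) v_{i-1} w` and `w * v = Σᵢ C(wt v - 1, i) v_{i-1} w`;
for `T ⊇ O(W)` this expresses that `T/O(W)` is an `A(V)`-sub-bimodule of `A(W)`. -/
def BimoduleClosed (T : Submodule ℂ W.carrier) : Prop :=
  ∀ k : ℤ, ∀ v ∈ V.wtSpace k, ∀ w ∈ T,
    (∑ᶠ i : ℕ, cchoose k i • W.op v ((i : ℤ) - 1) w) ∈ T ∧
    (∑ᶠ i : ℕ, cchoose (k - 1) i • W.op v ((i : ℤ) - 1) w) ∈ T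

/-- Equivalence (isomorphism) of weak modules. -/
def Equiv (M N : WeakModule V) : Prop :=
  ∃ e : M.carrier ≃ₗ[ℂ] N.carrier,
    ∀ (v : V.carrier) (n : ℤ) (w : M.carrier), e (M.op v n w) = N.op v n (e w)

end WeakModule

/-- `V` is of class 𝒜: `L(0)` acts semisimply on every weak `V`-module. -/
def VOA.classA (V : VOA) : Prop :=
  ∀ M : WeakModule V, (⨆ h : ℂ, M.eig h) = ⊤

/-- `V` is regular: every weak `V`-module is a direct sum of irreducible ordinary
`V`-modules. -/
def VOA.regular (V : VOA) : Prop :=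
  ∀ M : WeakModule V, ∃ (ι : Type) (S : ι → Submodule ℂ M.carrier),
    (∀ i, M.IsIrreducibleSub (S i) ∧ M.IsOrdinarySub (S i)) ∧
    (∀ i, Disjoint (S i) (⨆ (j : ι) (_ : j ≠ i), S j)) ∧ (⨆ i, S i) = ⊤

/-- A generalized `V`-module: a weak module with a semisimple `L(0)`-action, graded by
the `L(0)`-eigenvalues, with weight-space projections `projW`. -/
structure GenModule (V : VOA) extends WeakModule V where
  wt : ℂ → Submodule ℂ carrier
  projW : ℂ → carrier → carrier
  projW_linear : ∀ h : ℂ, IsLinearMap ℂ (projW h)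
  projW_mem : ∀ (h : ℂ) (w : carrier), projW h w ∈ wt h
  projW_eq : ∀ h : ℂ, ∀ w ∈ wt h, projW h w = w
  projW_ne : ∀ g h : ℂ, g ≠ h → ∀ w ∈ wt g, projW h w = 0
  projW_finite : ∀ w : carrier, (Function.support fun h => projW h w).Finite
  projW_sum : ∀ w : carrier, (∑ᶠ h : ℂ, projW h w) = w
  wt_L0 : ∀ h : ℂ, ∀ w ∈ wt h, op V.omega 1 w = h • w
  wt_op : ∀ k : ℤ, ∀ v ∈ V.wtSpace k, ∀ (h : ℂ) (n : ℤ), ∀ w ∈ wt h,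
    op v n w ∈ wt (h + (k : ℂ) - (n : ℂ) - 1)

/-- An ordinary `V`-module: a generalized module whose weight spaces are
finite-dimensional and whose weights are truncated from below in each coset `h + ℤ`. -/
structure OrdModule (V : VOA) extends GenModule V where
  wt_fd : ∀ h : ℂ, FiniteDimensional ℂ ↥(wt h)
  wt_lower : ∀ h : ℂ, ∃ N : ℤ, ∀ m : ℤ, m ≤ N → wt (h + (m : ℂ)) = ⊥

namespace GenModule

variable {V : VOA} (W : GenModule V)

/-- `W₊ = ⊕_{Re h > 0} W₍ₕ₎`. -/
def posW : Submodule ℂ W.carrier := ⨆ (h : ℂ) (_ : 0 < h.re), W.wt h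

/-- `C₁(W) = span(v₋₁W₊ (v ∈ V₊) together with L(-1)W)`. -/
def C1W : Submodule ℂ W.carrier :=
  Submodule.span ℂ
    ({x : W.carrier | ∃ v ∈ V.pos, ∃ w ∈ W.posW, x = W.op v (-1) w}
      ∪ {x : W.carrier | ∃ w : W.carrier, x = W.op V.omega 0 w})

/-- The restricted dual `W' = ⊕ₕ W₍ₕ₎* ⊆ W*`: the linear functionals vanishing on all
but finitely many weight spaces. -/
def restrictedDual : Set (W.carrier → ℂ) :=
  {α | IsLinearMap ℂ α ∧ {h : ℂ | ∃ w ∈ W.wt h, α w ≠ 0}.Finite}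

end GenModule

/-- `D(W)⁰`: the sum of the `L(0)`-eigenspaces of the weak module `D(W) ⊆ W*`, where
`L*(0) = ω*₁` acts on `α ∈ W*` by `(L*(0)α)(w) = α(L(0)w)`. -/
def OrdModule.DW0 {V : VOA} (W : OrdModule V) : Set (W.carrier → ℂ) :=
  {α | ∃ (S : Finset ℂ) (f : ℂ → (W.carrier → ℂ)),
    (∀ h ∈ S, f h ∈ W.toWeakModule.DW ∧
      ∀ w : W.carrier, f h (W.op V.omega 1 w) = h * f h w) ∧
    α = ∑ h ∈ S, f h}

/-- An ℕ-gradable weak `V`-module: a weak module with an ℕ-grading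
`W = ⊕_{n∈ℕ} W(n)` with `v_m W(n) ⊆ W(wt v + n - m - 1)` (graded pieces of negative
index are zero). -/
structure NGradedModule (V : VOA) extends WeakModule V where
  gr : ℤ → Submodule ℂ carrier
  gr_neg : ∀ n : ℤ, n < 0 → gr n = ⊥
  gr_sup : (⨆ n : ℤ, gr n) = ⊤
  gr_indep : ∀ n : ℤ, Disjoint (gr n) (⨆ (m : ℤ) (_ : m ≠ n), gr m)
  gr_op : ∀ k : ℤ, ∀ v ∈ V.wtSpace k, ∀ m n : ℤ, ∀ w ∈ gr n,
    op v m w ∈ gr (k + n - m - 1)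

/-- An intertwining operator of type `(W₃; W₁ W₂)` in the sense of
Frenkel–Huang–Lepowsky, recorded through its complex-indexed modes
`I w₁ h w₂ = (w₁)ₕ w₂` (so `Y(w₁,x)w₂ = Σ_{h∈ℂ} (w₁)ₕ w₂ x^{-h-1}`):
linearity, truncation, the `L(-1)`-derivative property, and the Jacobi identity in
component (Borcherds) form. -/
def IsIntertwiner {V : VOA} (W1 W2 W3 : OrdModule V)
    (I : W1.carrier → ℂ → W2.carrier → W3.carrier) : Prop :=
  (∀ (h : ℂ) (w2 : W2.carrier), IsLinearMap ℂ fun w1 => I w1 h w2) ∧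
  (∀ (w1 : W1.carrier) (h : ℂ), IsLinearMap ℂ (I w1 h)) ∧
  (∀ (w1 : W1.carrier) (w2 : W2.carrier) (h : ℂ),
    ∃ N : ℤ, ∀ n : ℤ, N ≤ n → I w1 (h + (n : ℂ)) w2 = 0) ∧
  (∀ (w1 : W1.carrier) (h : ℂ) (w2 : W2.carrier),
    I (W1.op V.omega 0 w1) h w2 = (-h) • I w1 (h - 1) w2) ∧
  (∀ (u : V.carrier) (w1 : W1.carrier) (w2 : W2.carrier) (l m : ℤ) (h : ℂ),
    (∑ᶠ i : ℕ, cchoose m i • I (W1.op u (l + (i : ℤ)) w1) ((m : ℂ) + h - (i : ℂ)) w2)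
      = ∑ᶠ i : ℕ, ((-1 : ℂ) ^ i * cchoose l i) •
          (W3.op u (l + m - (i : ℤ)) (I w1 (h + (i : ℂ)) w2)
            - ((-1 : ℂ) ^ l) • I w1 ((l : ℂ) + h - (i : ℂ)) (W2.op u (m + (i : ℤ)) w2)))

/-- The fusion rule `dim I(W₃; W₁W₂)` is finite: the space of intertwining operators of
the indicated type is finite-dimensional. -/
def FusionFinite {V : VOA} (W1 W2 W3 : OrdModule V) : Prop :=
  FiniteDimensional ℂ
    ↥(Submodule.span ℂ {I : W1.carrier → ℂ → W2.carrier → W3.carrier |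
        IsIntertwiner W1 W2 W3 I})

end

/-!
Let `D(W) ⊆ W*` consist of the functionals `α` such that for each `v` the modes of the adjoint
vertex operator satisfy `v*ₙ α = 0` for large `n`. It is a weak module, so over a vertex operator
algebra of class 𝒜 it is a sum of `L(0)`-eigenspaces. If infinitely many weight spaces of `W`
were not contained in `C₂(W)`, functionals supported on them and vanishing on `C₂(W)` would add up
to an element of `D(W)` with infinitely many weight components. Hence almost all weight spaces lie
in `C₂(W)`, and for an ordinary module `W` induction on the weight makes `W / O(W)`
finite-dimensional.

An intertwining operator of type `(W₃; W₁, W₂)`, with `W₂` and `W₃` irreducible, is determined by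
the coefficient carrying a lowest weight vector of `W₂` to the lowest weight space of `W₃`, a
linear map on `W₁` which kills `O(W₁)`. In the same way the zero modes on a lowest weight vector
of an irreducible `ℕ`-gradable module give a functional on `V / O(V)`, and by a density argument
inequivalent irreducibles give linearly independent functionals.
-/

noncomputable section

open Filter Finset

/-! ### Generalized binomial coefficients -/

theorem cchoose_eq_ringChoose (m : ℤ) (i : ℕ) : cchoose m i = Ring.choose (m : ℂ) i := by
  have hi : (i.factorial : ℂ) ≠ 0 := mod_cast i.factorial_ne_zero
  rw [cchoose, div_eq_iff hi, ← descPochhammer_eval_eq_prod_range, mul_comm, ← nsmul_eq_mul,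
    ← Ring.descPochhammer_eq_factorial_smul_choose, ← Polynomial.aeval_eq_smeval,
    ← descPochhammer_map (Int.castRingHom ℂ), Polynomial.eval_map]
  rfl

@[simp]
theorem cchoose_zero (m : ℤ) : cchoose m 0 = 1 := by simp [cchoose]

theorem cchoose_natCast (k i : ℕ) : cchoose k i = k.choose i := by
  rw [cchoose_eq_ringChoose, Int.cast_natCast, Ring.choose_natCast]

theorem cchoose_zero_left (i : ℕ) : cchoose 0 i = if i = 0 then 1 else 0 := by
  cases i <;> simp [cchoose_eq_ringChoose]

theorem cchoose_succ_succ (m : ℤ) (i : ℕ) :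
    cchoose (m + 1) (i + 1) = cchoose m i + cchoose m (i + 1) := by
  simpa only [cchoose_eq_ringChoose, Int.cast_add, Int.cast_one] using Ring.choose_succ_succ _ _

theorem succ_mul_cchoose_succ (m : ℤ) (i : ℕ) :
    ((i : ℂ) + 1) * cchoose m (i + 1) = ((m : ℂ) - i) * cchoose m i := by
  have hi : (i.factorial : ℂ) ≠ 0 := mod_cast i.factorial_ne_zero
  have hi' : (i : ℂ) + 1 ≠ 0 := mod_cast i.succ_ne_zero
  simp only [cchoose, prod_range_succ, Nat.factorial_succ, Nat.cast_mul, Nat.cast_add, Nat.cast_one]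
  field_simp

theorem cchoose_reflect (m : ℤ) (i : ℕ) : cchoose (i - 1 - m) i = (-1) ^ i * cchoose m i := by
  simp only [cchoose_eq_ringChoose]
  rw [show ((i - 1 - m : ℤ) : ℂ) = -((m : ℂ) + 1 - i) by push_cast; ring, Ring.choose_neg,
    Units.smul_def, Int.coe_negOnePow_natCast, zsmul_eq_mul]
  push_cast
  ring_nf

theorem neg_one_pow_mul_cchoose_neg_two (i : ℕ) : (-1 : ℂ) ^ i * cchoose (-2) i = i + 1 := by
  rw [← cchoose_reflect, show (i : ℤ) - 1 - -2 = (i + 1 : ℕ) by push_cast; ring, cchoose_natCast,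
    Nat.choose_succ_self_right]
  push_cast
  rfl

theorem sum_antidiagonal_cchoose_mul_cchoose_sub (m n : ℤ) (r : ℕ) :
    ∑ x ∈ antidiagonal r, (-1 : ℂ) ^ x.1 * cchoose m x.1 * cchoose (n - x.1) x.2
      = cchoose (n - m) r := by
  have vandermonde : cchoose (r - 1 - (n - m)) r
      = ∑ x ∈ antidiagonal r, cchoose m x.1 * cchoose (r - 1 - n) x.2 := by
    simp only [cchoose_eq_ringChoose]
    rw [← Ring.add_choose_eq r (Commute.all _ _)]
    push_cast
    ring_nf
  calc ∑ x ∈ antidiagonal r, (-1 : ℂ) ^ x.1 * cchoose m x.1 * cchoose (n - x.1) x.2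
      = ∑ x ∈ antidiagonal r, (-1) ^ r * (cchoose m x.1 * cchoose (r - 1 - n) x.2) := by
        refine sum_congr rfl fun x hx => ?_
        have hr : x.1 + x.2 = r := mem_antidiagonal.1 hx
        have reflect : cchoose (n - x.1) x.2 = (-1) ^ x.2 * cchoose (r - 1 - n) x.2 := by
          rw [← cchoose_reflect, ← hr]
          push_cast
          ring_nf
        rw [reflect, ← hr, pow_add]
        ring
    _ = cchoose (n - m) r := by
        rw [← mul_sum, ← vandermonde, cchoose_reflect, ← mul_assoc, ← mul_pow]
        simp

/-! ### Sums over long initial segments of the natural numbers -/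

section Sums

variable {E : Type*}

theorem eventually_sum_range_eq_finsum [AddCommMonoid E] {f : ℕ → E}
    (hf : ∀ᶠ i in atTop, f i = 0) : ∀ᶠ T in atTop, ∑ i ∈ range T, f i = ∑ᶠ i, f i := by
  obtain ⟨N, hN⟩ := eventually_atTop.1 hf
  filter_upwards [eventually_ge_atTop N] with T hT
  refine (finsum_eq_sum_of_support_subset _ fun i hi => ?_).symm
  simp only [coe_range, Set.mem_Iio]
  by_contra! hTi
  exact hi (hN i (hT.trans hTi))

theorem finsum_eq_finsum_iff_eventually [AddCommMonoid E] {f g : ℕ → E}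
    (hf : ∀ᶠ i in atTop, f i = 0) (hg : ∀ᶠ i in atTop, g i = 0) :
    ∑ᶠ i, f i = ∑ᶠ i, g i ↔ ∀ᶠ T in atTop, ∑ i ∈ range T, f i = ∑ i ∈ range T, g i := by
  have hfg := (eventually_sum_range_eq_finsum hf).and (eventually_sum_range_eq_finsum hg)
  constructor
  · intro h
    filter_upwards [hfg] with T hT
    rw [hT.1, hT.2, h]
  · intro h
    obtain ⟨T, hT, hTfg⟩ := (hfg.and h).exists
    rw [← hT.1, ← hT.2, hTfg]

theorem sum_range_sum_antidiagonal [AddCommMonoid E] {T : ℕ} {F : ℕ → ℕ → E}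
    (hF : ∀ a b, T ≤ a + b → F a b = 0) :
    ∑ t ∈ range T, ∑ x ∈ antidiagonal t, F x.1 x.2 = ∑ a ∈ range T, ∑ b ∈ range T, F a b := by
  simp only [Nat.sum_antidiagonal_eq_sum_range_succ F]
  rw [sum_range_diag_flip]
  refine sum_congr rfl fun a _ => sum_subset (by grind) fun b _ hb => ?_
  exact hF a b (by grind)

variable [AddCommGroup E] [Module ℂ E]

theorem sum_range_cchoose_natCast_smul (k : ℕ) (f : ℕ → E) {T : ℕ} (hT : k < T) :
    ∑ i ∈ range T, cchoose k i • f i = ∑ i ∈ range (k + 1), (k.choose i : ℂ) • f i := by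
  simp only [cchoose_natCast]
  refine (sum_subset (by grind) fun i _ hi => ?_).symm
  rw [Nat.choose_eq_zero_of_lt (by grind), Nat.cast_zero, zero_smul]

theorem succ_smul_sum_antidiagonal_succ (F : ℕ → ℕ → E) (t : ℕ) :
    ((t : ℂ) + 1) • ∑ x ∈ antidiagonal (t + 1), F x.1 x.2
      = ∑ x ∈ antidiagonal t,
          (((x.1 : ℂ) + 1) • F (x.1 + 1) x.2 + ((x.2 : ℂ) + 1) • F x.1 (x.2 + 1)) := by
  calc ((t : ℂ) + 1) • ∑ x ∈ antidiagonal (t + 1), F x.1 x.2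
      = ∑ x ∈ antidiagonal (t + 1), (x.1 : ℂ) • F x.1 x.2
          + ∑ x ∈ antidiagonal (t + 1), (x.2 : ℂ) • F x.1 x.2 := by
        rw [smul_sum, ← sum_add_distrib]
        refine sum_congr rfl fun x hx => ?_
        rw [← add_smul]
        congr 1
        exact_mod_cast (mem_antidiagonal.1 hx).symm
    _ = _ := by
        rw [Nat.sum_antidiagonal_succ, Nat.sum_antidiagonal_succ', sum_add_distrib]
        simp

end Sums

/-! ### Modes and their commutators with the conformal vector -/

/-- The `n`-th product `uₙ v` of a vertex operator algebra as a bilinear map. -/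
def VOA.mode (V : VOA) (n : ℤ) : V.carrier →ₗ[ℂ] V.carrier →ₗ[ℂ] V.carrier :=
  LinearMap.mk₂ ℂ (fun u v => V.op u n v)
    (fun _ _ v => (V.op_linear_left n v).map_add _ _)
    (fun _ _ v => (V.op_linear_left n v).map_smul _ _)
    (fun u => (V.op_linear_right u n).map_add)
    (fun c u => (V.op_linear_right u n).map_smul c)

theorem VOA.mode_apply (V : VOA) (n : ℤ) (u v : V.carrier) : V.mode n u v = V.op u n v := rfl

/-- The `n`-th mode `uₙ w` of a weak module as a bilinear map. -/
def WeakModule.mode {V : VOA} (W : WeakModule V) (n : ℤ) :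
    V.carrier →ₗ[ℂ] W.carrier →ₗ[ℂ] W.carrier :=
  LinearMap.mk₂ ℂ (fun u w => W.op u n w)
    (fun _ _ w => (W.op_linear_left n w).map_add _ _)
    (fun _ _ w => (W.op_linear_left n w).map_smul _ _)
    (fun u => (W.op_linear_right u n).map_add)
    (fun c u => (W.op_linear_right u n).map_smul c)

theorem WeakModule.mode_apply {V : VOA} (W : WeakModule V) (n : ℤ) (u : V.carrier)
    (w : W.carrier) : W.mode n u w = W.op u n w := rfl

/-- A vertex operator algebra as a weak module over itself. -/
@[reducible] def VOA.adjoint (V : VOA) : WeakModule V where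
  carrier := V.carrier
  op := V.op
  op_linear_left := V.op_linear_left
  op_linear_right := V.op_linear_right
  trunc := V.trunc
  one_op := V.one_op
  borcherds := V.borcherds

theorem eventually_atTop_of_forall_le {p : ℤ → Prop} (h : ∃ N, ∀ n, N ≤ n → p n) (l : ℤ) :
    ∀ᶠ i : ℕ in atTop, p (l + i) :=
  (tendsto_atTop_add_const_left atTop l tendsto_natCast_atTop_atTop).eventually
    (eventually_atTop.2 h)

namespace VOA

variable {V : VOA}

theorem eventually_mode_eq_zero (u v : V.carrier) (l : ℤ) :
    ∀ᶠ i : ℕ in atTop, V.mode (l + i) u v = 0 :=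
  eventually_atTop_of_forall_le (V.trunc u v) l

theorem mode_omega_zero (u : V.carrier) : V.mode 0 V.omega u = V.mode (-2) u V.one := by
  calc V.op V.omega 0 u = V.op (V.op V.omega 0 u) (-1) V.one := (V.create _).symm
    _ = V.op u (-2) V.one := by simp [V.L_neg_one]

theorem induction_on_homogeneous {p : V.carrier → Prop} (v : V.carrier)
    (homogeneous : ∀ k, ∀ v ∈ V.wtSpace k, p v) (add : ∀ u v, p u → p v → p (u + v)) : p v := by
  rw [← V.proj_sum v, finsum_eq_sum _ (V.proj_finite v)]
  exact sum_induction _ p add (homogeneous 0 0 (V.wtSpace 0).zero_mem)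
    fun k _ => homogeneous k _ (V.proj_mem k v)

end VOA

namespace WeakModule

variable {V : VOA} (W : WeakModule V)

theorem eventually_mode_eq_zero (u : V.carrier) (w : W.carrier) (l : ℤ) :
    ∀ᶠ i : ℕ in atTop, W.mode (l + i) u w = 0 :=
  eventually_atTop_of_forall_le (W.trunc u w) l

theorem eventually_borcherds (u v : V.carrier) (w : W.carrier) (l m n : ℤ) :
    ∀ᶠ T in atTop,
      ∑ i ∈ range T, cchoose m i • W.mode (m + n - i) (V.mode (l + i) u v) w
        = ∑ i ∈ range T, ((-1 : ℂ) ^ i * cchoose l i) •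
            (W.mode (l + m - i) u (W.mode (n + i) v w)
              - ((-1 : ℂ) ^ l) • W.mode (l + n - i) v (W.mode (m + i) u w)) := by
  refine (finsum_eq_finsum_iff_eventually ?_ ?_).1 (W.borcherds u v w l m n)
  · filter_upwards [V.eventually_mode_eq_zero u v l] with i hi
    rw [hi, map_zero, LinearMap.zero_apply, smul_zero]
  · filter_upwards [W.eventually_mode_eq_zero v w n, W.eventually_mode_eq_zero u w m] with i hv hu
    rw [hv, hu, map_zero, map_zero, smul_zero, sub_zero, smul_zero]

theorem eventually_mode_comm (u v : V.carrier) (w : W.carrier) (m n : ℤ) :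
    ∀ᶠ T in atTop,
      W.mode m u (W.mode n v w) - W.mode n v (W.mode m u w)
        = ∑ i ∈ range T, cchoose m i • W.mode (m + n - i) (V.mode i u v) w := by
  filter_upwards [W.eventually_borcherds u v w 0 m n, eventually_gt_atTop 0] with T h hT
  simpa [cchoose_zero_left, hT] using h.symm

theorem mode_natCast_comm (k : ℕ) (u v : V.carrier) (w : W.carrier) (n : ℤ) :
    W.mode k u (W.mode n v w) - W.mode n v (W.mode k u w)
      = ∑ i ∈ range (k + 1), (k.choose i : ℂ) • W.mode (k + n - i) (V.mode i u v) w := by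
  obtain ⟨T, h, hT⟩ := ((W.eventually_mode_comm u v w k n).and (eventually_gt_atTop k)).exists
  rw [h, sum_range_cchoose_natCast_smul k _ hT]

/-- The `L(-1)`-derivative property, obtained by taking `v = 𝟏`, `l = -2`, `m = 0` in the
Borcherds identity. -/
theorem mode_derivative (u : V.carrier) (n : ℤ) (w : W.carrier) :
    W.mode n (V.mode 0 V.omega u) w = (-(n : ℂ)) • W.mode (n - 1) u w := by
  obtain ⟨T, h, hT⟩ := ((W.eventually_borcherds u V.one w (-2) 0 n).and
    (eventually_gt_atTop n.natAbs)).exists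
  rw [sum_eq_single_of_mem 0 (by grind)
    fun i _ hi => by rw [cchoose_zero_left, if_neg hi, zero_smul]] at h
  have mode_one (j : ℤ) (x : W.carrier) : W.mode j V.one x = if j = -1 then x else 0 :=
    W.one_op j x
  simp only [mode_one, neg_one_pow_mul_cchoose_neg_two, cchoose_zero, one_smul, Nat.cast_zero,
    add_zero, zero_add, sub_zero, even_two.neg.neg_one_zpow] at h
  rw [VOA.mode_omega_zero, h, sum_eq_single_of_mem (n.natAbs - 1) (by grind)]
  · rcases lt_trichotomy n 0 with hn | rfl | hn
    · obtain ⟨k, rfl⟩ : ∃ k : ℕ, n = -1 - k := ⟨(-1 - n).toNat, by omega⟩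
      rw [show (-1 - (k : ℤ)).natAbs - 1 = k by omega, if_pos (by omega), if_neg (by omega),
        sub_zero, show (-2 : ℤ) - k = -1 - k - 1 by ring]
      push_cast
      module
    · simp
    · obtain ⟨k, rfl⟩ : ∃ k : ℕ, n = k + 1 := ⟨(n - 1).toNat, by omega⟩
      rw [show ((k : ℤ) + 1).natAbs - 1 = k by omega, if_neg (by omega), if_pos (by omega),
        map_zero, add_sub_cancel_right]
      push_cast
      module
  · intro i _ hi
    rw [if_neg (by omega), if_neg (by omega), map_zero, sub_zero, smul_zero]

theorem L0_mode {k : ℤ} {u : V.carrier} (hu : u ∈ V.wtSpace k) (n : ℤ) (w : W.carrier) :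
    W.L0 (W.mode n u w) = W.mode n u (W.L0 w) + ((k : ℂ) - n - 1) • W.mode n u w := by
  have h := W.mode_natCast_comm 1 V.omega u w n
  have hk : V.mode 1 V.omega u = (k : ℂ) • u := V.L_zero k u hu
  simp only [sum_range_succ, sum_range_zero, Nat.cast_zero, Nat.cast_one, mode_derivative, hk,
    zero_add, sub_zero, map_smul, LinearMap.smul_apply, add_sub_cancel_left, Nat.choose_self,
    Nat.choose_zero_right, one_smul] at h
  rw [sub_eq_iff_eq_add] at h
  refine h.trans ?_
  push_cast
  rw [show W.mode 1 V.omega w = W.L0 w from rfl]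
  module

theorem mode_two_omega_mode {k : ℤ} {u : V.carrier} (hu : u ∈ V.wtSpace k) (n : ℤ)
    (w : W.carrier) :
    W.mode 2 V.omega (W.mode n u w) = W.mode n (V.mode 2 V.omega u) w
      + (2 * (k : ℂ) - n - 2) • W.mode (n + 1) u w + W.mode n u (W.mode 2 V.omega w) := by
  have h := W.mode_natCast_comm 2 V.omega u w n
  have hk : V.mode 1 V.omega u = (k : ℂ) • u := V.L_zero k u hu
  simp only [sum_range_succ, sum_range_zero, Nat.cast_zero, Nat.cast_one, mode_derivative, hk,
    zero_add, sub_zero, map_smul, LinearMap.smul_apply, add_sub_cancel_left, Nat.choose_self,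
    Nat.choose_zero_right, Nat.choose_one_right, one_smul, Nat.cast_ofNat,
    show (2 : ℤ) + n - 1 = n + 1 by ring] at h
  rw [sub_eq_iff_eq_add] at h
  rw [h]
  push_cast
  module

end WeakModule

/-! ### Divided powers of `L(1)` -/

namespace VOA

variable (V : VOA)

/-- The operator `L(1)` on `V`. -/
def L1 : V.carrier →ₗ[ℂ] V.carrier := V.mode 2 V.omega

/-- The divided power `L(1)ⁱ / i!` on `V`. -/
def L1DivPow (i : ℕ) : V.carrier →ₗ[ℂ] V.carrier := (i.factorial : ℂ)⁻¹ • V.L1 ^ i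

variable {V}

@[simp]
theorem L1DivPow_zero (u : V.carrier) : V.L1DivPow 0 u = u := by simp [L1DivPow]

theorem L1_L1DivPow (i : ℕ) (u : V.carrier) :
    V.L1 (V.L1DivPow i u) = ((i : ℂ) + 1) • V.L1DivPow (i + 1) u := by
  have hi : (i : ℂ) + 1 ≠ 0 := mod_cast i.succ_ne_zero
  simp only [L1DivPow, LinearMap.smul_apply, map_smul, pow_succ', Module.End.mul_apply, smul_smul,
    Nat.factorial_succ, Nat.cast_mul, Nat.cast_add, Nat.cast_one, mul_inv]
  rw [mul_inv_cancel_left₀ hi]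

theorem L1DivPow_mem {h : ℤ} {u : V.carrier} (hu : u ∈ V.wtSpace h) (i : ℕ) :
    V.L1DivPow i u ∈ V.wtSpace (h - i) := by
  refine Submodule.smul_mem _ _ ?_
  induction i with
  | zero => simpa using hu
  | succ i ih =>
    have hwt := V.op_wt 2 (h - i) 2 _ V.omega_wt _ ih
    rw [show 2 + (h - (i : ℤ)) - 2 - 1 = h - (i + 1 : ℕ) by push_cast; ring] at hwt
    rwa [pow_succ', Module.End.mul_apply]

variable (V) in
theorem eventually_L1DivPow_eq_zero (h : ℤ) :
    ∀ᶠ i in atTop, ∀ u ∈ V.wtSpace h, V.L1DivPow i u = 0 := by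
  obtain ⟨N, hN⟩ := V.lower_trunc
  filter_upwards [eventually_gt_atTop (h - N).toNat] with i hi u hu
  simpa [hN (h - i) (by omega)] using L1DivPow_mem hu i

theorem L1DivPow_eq_zero_of_pos {u : V.carrier} (hu : V.L1 u = 0) {i : ℕ} (hi : 0 < i) :
    V.L1DivPow i u = 0 := by
  obtain ⟨j, rfl⟩ := Nat.exists_eq_succ_of_ne_zero hi.ne'
  rw [L1DivPow, pow_succ, LinearMap.smul_apply, Module.End.mul_apply, hu, map_zero, smul_zero]

theorem L1_one : V.L1 V.one = 0 := V.create_nonneg _ _ (by norm_num)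

theorem L1_omega : V.L1 V.omega = 0 := by
  have h := V.virasoro 1 (-2) V.one
  norm_num at h
  rw [V.create, V.create_nonneg _ _ le_rfl, V.create_nonneg _ 2 (by norm_num),
    (V.op_linear_right V.omega (-1)).map_zero, sub_zero, smul_zero] at h
  exact h

/-- The divided power `(ad L(1))ᵖ / p!` applied to the mode `uₙ`, for `u` of weight `h`, in closed
form. -/
def adL1DivPow (h n : ℤ) (u : V.carrier) (p : ℕ) : V.carrier →ₗ[ℂ] V.carrier :=
  ∑ x ∈ antidiagonal p, cchoose (2 * h - n - 2 - x.1) x.2 • V.mode (n + x.2) (V.L1DivPow x.1 u)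

theorem sum_antidiagonal_cchoose_shift {E : Type*} [AddCommGroup E] [Module ℂ E] (m : ℤ)
    (F : ℕ → ℕ → E) (p : ℕ) :
    ∑ x ∈ antidiagonal p,
        (((x.1 : ℂ) + 1) * (cchoose (m - x.1) x.2 - cchoose (m - x.1 - 1) x.2)) • F (x.1 + 1) x.2
      = ∑ x ∈ antidiagonal p, ((x.1 : ℂ) * cchoose (m - x.1) x.2) • F x.1 (x.2 + 1) := by
  cases p with
  | zero => simp
  | succ p =>
    rw [Nat.sum_antidiagonal_succ', Nat.sum_antidiagonal_succ]
    simp only [cchoose_zero, sub_self, mul_zero, zero_smul, zero_add, Nat.cast_zero, zero_mul]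
    refine sum_congr rfl fun x _ => ?_
    have pascal := cchoose_succ_succ (m - x.1 - 1) x.2
    rw [sub_add_cancel] at pascal
    rw [pascal, add_sub_cancel_right]
    push_cast
    rw [sub_sub]

theorem L1_adL1DivPow {h : ℤ} {u : V.carrier} (hu : u ∈ V.wtSpace h) (n : ℤ) (p : ℕ)
    (v : V.carrier) :
    V.L1 (adL1DivPow h n u p v)
      = ((p : ℂ) + 1) • adL1DivPow h n u (p + 1) v + adL1DivPow h n u p (V.L1 v) := by
  let F (a s : ℕ) : V.carrier := V.mode (n + s) (V.L1DivPow a u) v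
  have apply_eq (p : ℕ) (v : V.carrier) : adL1DivPow h n u p v
      = ∑ x ∈ antidiagonal p,
          cchoose (2 * h - n - 2 - x.1) x.2 • V.mode (n + x.2) (V.L1DivPow x.1 u) v := by
    simp [adL1DivPow]
  have shift := sum_antidiagonal_cchoose_shift (2 * h - n - 2) F p
  rw [← sub_eq_zero, ← sum_sub_distrib] at shift
  rw [apply_eq, apply_eq, apply_eq,
    succ_smul_sum_antidiagonal_succ (fun a s => cchoose (2 * h - n - 2 - a) s • F a s) p, map_sum,
    ← sub_eq_zero, ← shift, ← sum_add_distrib, ← sum_sub_distrib]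
  refine sum_congr rfl fun x _ => ?_
  dsimp only [F]
  have comm : V.L1 (V.mode (n + x.2) (V.L1DivPow x.1 u) v)
      = V.mode (n + x.2) (V.L1 (V.L1DivPow x.1 u)) v
      + (2 * ((h - x.1 : ℤ) : ℂ) - (n + x.2 : ℤ) - 2) • V.mode (n + x.2 + 1) (V.L1DivPow x.1 u) v
      + V.mode (n + x.2) (V.L1DivPow x.1 u) (V.L1 v) :=
    V.adjoint.mode_two_omega_mode (L1DivPow_mem hu x.1) (n + x.2) v
  have hsucc : n + (x.2 : ℤ) + 1 = n + ((x.2 + 1 : ℕ) : ℤ) := by push_cast; ring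
  have hpred : 2 * h - n - 2 - ((x.1 + 1 : ℕ) : ℤ) = 2 * h - n - 2 - x.1 - 1 := by
    push_cast; ring
  rw [map_smul, comm, L1_L1DivPow, map_smul, LinearMap.smul_apply, hpred, hsucc,
    smul_smul ((x.2 : ℂ) + 1), succ_mul_cchoose_succ]
  push_cast
  module

theorem L1DivPow_mode {h : ℤ} {u : V.carrier} (hu : u ∈ V.wtSpace h) (n : ℤ) (v : V.carrier)
    (t : ℕ) :
    V.L1DivPow t (V.mode n u v)
      = ∑ x ∈ antidiagonal t, adL1DivPow h n u x.1 (V.L1DivPow x.2 v) := by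
  induction t with
  | zero => simp [adL1DivPow]
  | succ t ih =>
    have ht : (t : ℂ) + 1 ≠ 0 := mod_cast t.succ_ne_zero
    refine smul_right_injective _ ht ?_
    change ((t : ℂ) + 1) • _ = ((t : ℂ) + 1) • _
    rw [← L1_L1DivPow, ih, map_sum,
      succ_smul_sum_antidiagonal_succ fun p b => adL1DivPow h n u p (V.L1DivPow b v)]
    refine sum_congr rfl fun x _ => ?_
    rw [L1_adL1DivPow hu, L1_L1DivPow, map_smul]

end VOA

/-! ### Gradings and `L(0)`-eigenspaces -/

theorem eq_of_le_of_iSupIndep_of_iSup_eq_top {ι α : Type*} [CompleteLattice α] [IsModularLattice α]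
    {s t : ι → α} (ht : iSupIndep t) (hst : s ≤ t) (hs : ⨆ i, s i = ⊤) : s = t := by
  funext i
  have hsup : s i ⊔ ⨆ (j) (_ : j ≠ i), t j = ⊤ := by
    refine top_le_iff.1 (hs.symm.le.trans (iSup_le fun j => ?_))
    by_cases hji : j = i
    · exact hji ▸ le_sup_left
    · exact ((hst j).trans (le_iSup₂_of_le j hji le_rfl)).trans le_sup_right
  calc s i = s i ⊔ (⨆ (j) (_ : j ≠ i), t j) ⊓ t i := by rw [(ht i).symm.eq_bot, sup_bot_eq]
    _ = t i := by rw [← sup_inf_assoc_of_le _ (hst i), hsup, top_inf_eq]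

section LinearMapEquiv

variable {ι R N E : Type*} [CommRing R] [AddCommGroup N] [Module R N] [AddCommGroup E] [Module R E]
  {p : ι → Submodule R N}

open Classical in
/-- If `N` is the internal direct sum of the submodules `p i`, then a linear map on `N` is the same
as a family of linear maps on the `p i`. -/
def linearMapEquivOfIndep (hp : iSupIndep p) (htop : ⨆ i, p i = ⊤) :
    (∀ i, p i →ₗ[R] E) ≃ₗ[R] (N →ₗ[R] E) :=
  DFinsupp.lsum R ≪≫ₗ (hp.linearEquiv htop).congrLeft E R

theorem linearMapEquivOfIndep_apply_of_mem (hp : iSupIndep p) (htop : ⨆ i, p i = ⊤)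
    (f : ∀ i, p i →ₗ[R] E) {i : ι} {x : N} (hx : x ∈ p i) :
    linearMapEquivOfIndep hp htop f x = f i ⟨x, hx⟩ := by
  classical
  simp [linearMapEquivOfIndep, LinearEquiv.congrLeft, hp.linearEquiv_symm_apply htop hx]

open Classical in
/-- The projection onto the summand `p i` of an internal direct sum. -/
def projOfIndep (hp : iSupIndep p) (htop : ⨆ i, p i = ⊤) (i : ι) : N →ₗ[R] p i :=
  DFinsupp.lapply i ∘ₗ (hp.linearEquiv htop).symm.toLinearMap

theorem projOfIndep_apply_of_mem (hp : iSupIndep p) (htop : ⨆ i, p i = ⊤) {i : ι} {x : N}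
    (hx : x ∈ p i) : projOfIndep hp htop i x = ⟨x, hx⟩ := by
  classical
  simp [projOfIndep, hp.linearEquiv_symm_apply htop hx]

theorem projOfIndep_apply_of_ne (hp : iSupIndep p) (htop : ⨆ i, p i = ⊤) {i j : ι} (hij : i ≠ j)
    {x : N} (hx : x ∈ p i) : projOfIndep hp htop j x = 0 := by
  classical
  simp [projOfIndep, hp.linearEquiv_symm_apply htop hx, DFinsupp.single_eq_of_ne hij.symm]

end LinearMapEquiv

namespace WeakModule

variable {V : VOA} (W : WeakModule V)

variable {W} in
theorem mem_eig {h : ℂ} {w : W.carrier} : w ∈ W.eig h ↔ W.L0 w = h • w := by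
  simp [eig, LinearMap.mem_ker, sub_eq_zero]

theorem iSupIndep_eig : iSupIndep W.eig := by
  have heig : W.eig = Module.End.eigenspace W.L0 := by
    ext h w
    rw [mem_eig, Module.End.mem_eigenspace_iff]
  exact heig ▸ Module.End.eigenspaces_iSupIndep W.L0

variable {W} in
theorem mode_mem_eig {k : ℤ} {u : V.carrier} (hu : u ∈ V.wtSpace k) (n : ℤ) {h : ℂ}
    {w : W.carrier} (hw : w ∈ W.eig h) : W.mode n u w ∈ W.eig (h + (k - n - 1 : ℤ)) := by
  rw [mem_eig] at hw ⊢
  rw [W.L0_mode hu, hw, map_smul]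
  push_cast
  module

end WeakModule

namespace VOA

variable (V : VOA)

theorem iSup_wtSpace : ⨆ n, V.wtSpace n = ⊤ :=
  eq_top_iff.2 fun v _ => induction_on_homogeneous v
    (fun k _ hv => Submodule.mem_iSup_of_mem k hv) fun _ _ => Submodule.add_mem _

theorem wtSpace_le_eig (n : ℤ) : V.wtSpace n ≤ V.adjoint.eig n := fun v hv =>
  WeakModule.mem_eig.2 (V.L_zero n v hv)

theorem iSupIndep_wtSpace : iSupIndep V.wtSpace :=
  (V.adjoint.iSupIndep_eig.comp Int.cast_injective).mono V.wtSpace_le_eig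

end VOA

/-! ### The adjoint vertex operators -/

namespace WeakModule

variable {V : VOA} (W : WeakModule V)

/-- The transpose, acting on `W`, of the coefficient `v*ₙ` of the adjoint vertex operator. On `v`
of weight `h` it is `(-1)^h ∑ᵢ (L(1)ⁱ v / i!)_{2h-n-i-2}`, a sum that is finite on each weight
space. -/
def dualMode (n : ℤ) : V.carrier →ₗ[ℂ] W.carrier →ₗ[ℂ] W.carrier :=
  linearMapEquivOfIndep V.iSupIndep_wtSpace V.iSup_wtSpace fun h =>
    (-1 : ℂ) ^ h • ∑ᶠ i : ℕ, W.mode (2 * h - n - i - 2) ∘ₗ V.L1DivPow i ∘ₗ (V.wtSpace h).subtype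

variable {W}

theorem dualMode_apply_of_mem {h : ℤ} {v : V.carrier} (hv : v ∈ V.wtSpace h) {T : ℕ}
    (hT : ∀ i, T ≤ i → V.L1DivPow i v = 0) (n : ℤ) :
    W.dualMode n v
      = (-1 : ℂ) ^ h • ∑ i ∈ range T, W.mode (2 * h - n - i - 2) (V.L1DivPow i v) := by
  have hzero : ∀ᶠ i : ℕ in atTop,
      W.mode (2 * h - n - i - 2) ∘ₗ V.L1DivPow i ∘ₗ (V.wtSpace h).subtype = 0 := by
    filter_upwards [V.eventually_L1DivPow_eq_zero h] with i hi
    ext ⟨u, hu⟩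
    simp [hi u hu]
  obtain ⟨S, hS, hTS⟩ :=
    ((eventually_sum_range_eq_finsum hzero).and (eventually_ge_atTop T)).exists
  rw [dualMode, linearMapEquivOfIndep_apply_of_mem _ _ _ hv, ← hS, LinearMap.smul_apply,
    LinearMap.sum_apply]
  congr 1
  refine (sum_subset (range_mono hTS) fun i _ hi => ?_).symm
  simp [hT i (by grind)]

theorem dualMode_apply_of_L1_eq_zero {h : ℤ} {v : V.carrier} (hv : v ∈ V.wtSpace h)
    (h1 : V.L1 v = 0) (n : ℤ) : W.dualMode n v = (-1 : ℂ) ^ h • W.mode (2 * h - n - 2) v := by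
  simp [dualMode_apply_of_mem hv (T := 1) fun _ hi => VOA.L1DivPow_eq_zero_of_pos h1 hi]

theorem dualMode_one (n : ℤ) (w : W.carrier) :
    W.dualMode n V.one w = if n = -1 then w else 0 := by
  rw [dualMode_apply_of_L1_eq_zero V.one_wt VOA.L1_one, zpow_zero, one_smul]
  exact (W.one_op _ w).trans (if_congr (by omega) rfl rfl)

variable (W) in
theorem dualMode_omega_one : W.dualMode 1 V.omega = W.L0 := by
  rw [dualMode_apply_of_L1_eq_zero V.omega_wt VOA.L1_omega]
  norm_num
  rfl

end WeakModule

section Sums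

variable {E : Type*}

theorem sum_range_sum_antidiagonal_antidiagonal [AddCommMonoid E] {T : ℕ} {F : ℕ → ℕ → ℕ → E}
    (hF : ∀ a s b, T ≤ a + s + b → F a s b = 0) :
    ∑ t ∈ range T, ∑ x ∈ antidiagonal t, ∑ y ∈ antidiagonal x.1, F y.1 y.2 x.2
      = ∑ a ∈ range T, ∑ b ∈ range T, ∑ s ∈ range T, F a s b := by
  rw [sum_range_sum_antidiagonal (F := fun p b => ∑ y ∈ antidiagonal p, F y.1 y.2 b)]
  · rw [sum_comm]
    simp only [fun b => sum_range_sum_antidiagonal (T := T) (F := fun a s => F a s b)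
      fun a s h => hF a s b (by omega)]
    rw [sum_comm]
  · intro p b hpb
    refine sum_eq_zero fun y hy => hF _ _ _ ?_
    rwa [mem_antidiagonal.1 hy]

theorem sum_range_cchoose_mul_cchoose_sub_smul [AddCommGroup E] [Module ℂ E] (m Y : ℤ) {T : ℕ}
    {F : ℕ → E} (hF : ∀ r, T ≤ r → F r = 0) :
    ∑ i ∈ range T, ∑ s ∈ range T, ((-1 : ℂ) ^ i * cchoose m i * cchoose (Y - i) s) • F (i + s)
      = ∑ r ∈ range T, cchoose (Y - m) r • F r := by
  rw [← sum_range_sum_antidiagonal fun i s h => by rw [hF _ h, smul_zero]]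
  refine sum_congr rfl fun r _ => ?_
  rw [← sum_antidiagonal_cchoose_mul_cchoose_sub, sum_smul]
  exact sum_congr rfl fun x hx => by rw [mem_antidiagonal.1 hx]

theorem eventually_forall₂_of_forall_le {p : ℕ → ℕ → ℕ → Prop} {K : ℕ}
    (hp : ∀ a b, ∀ᶠ T in atTop, p a b T) (hK : ∀ a b T, K ≤ a ∨ K ≤ b → p a b T) :
    ∀ᶠ T in atTop, ∀ a b, p a b T := by
  filter_upwards [(range K ×ˢ range K).eventually_all.2 fun x _ => hp x.1 x.2] with T hT a b
  by_cases hab : K ≤ a ∨ K ≤ b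
  · exact hK a b T hab
  · exact hT (a, b) (by grind)

end Sums

namespace WeakModule

variable {V : VOA} {W : WeakModule V} {h k : ℤ} {u v : V.carrier}

theorem dualMode_mode (hu : u ∈ V.wtSpace h) (hv : v ∈ V.wtSpace k) (p q : ℤ) {T : ℕ}
    (hT : ∀ a b s : ℕ, T ≤ a + b + s →
      V.mode (q + s) (V.L1DivPow a u) (V.L1DivPow b v) = 0) (w : W.carrier) :
    W.dualMode p (V.mode q u v) w
      = (-1 : ℂ) ^ (h + k - q - 1) • ∑ a ∈ range T, ∑ b ∈ range T, ∑ s ∈ range T,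
          cchoose (2 * h - q - 2 - a) s •
            W.mode (2 * h + 2 * k - 2 * q - p - 4 - a - b - s)
              (V.mode (q + s) (V.L1DivPow a u) (V.L1DivPow b v)) w := by
  have huv : V.mode q u v ∈ V.wtSpace (h + k - q - 1) := V.op_wt h k q u hu v hv
  rw [dualMode_apply_of_mem huv (T := T)]
  · rw [← sum_range_sum_antidiagonal_antidiagonal (F := fun a s b => cchoose (2 * h - q - 2 - a) s •
      W.mode (2 * h + 2 * k - 2 * q - p - 4 - a - b - s)
        (V.mode (q + s) (V.L1DivPow a u) (V.L1DivPow b v)) w)]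
    · simp only [LinearMap.smul_apply, LinearMap.sum_apply, VOA.L1DivPow_mode hu, map_sum,
        VOA.adL1DivPow, map_smul]
      congr 1
      refine sum_congr rfl fun t _ => sum_congr rfl fun x hx => sum_congr rfl fun y hy => ?_
      rw [HasAntidiagonal.mem_antidiagonal] at hx hy
      congr 4
      omega
    · intro a s b hasb
      rw [hT a b s (by omega), map_zero, LinearMap.zero_apply, smul_zero]
  · intro t ht
    rw [VOA.L1DivPow_mode hu]
    refine sum_eq_zero fun x hx => ?_
    rw [VOA.adL1DivPow, LinearMap.sum_apply]
    refine sum_eq_zero fun y hy => ?_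
    rw [HasAntidiagonal.mem_antidiagonal] at hx hy
    rw [LinearMap.smul_apply, hT _ _ _ (by omega), smul_zero]

theorem sum_cchoose_smul_dualMode_mode (hu : u ∈ V.wtSpace h) (hv : v ∈ V.wtSpace k) (l m n : ℤ)
    {T : ℕ}
    (hT : ∀ a b j : ℕ, T ≤ a + b + j →
      V.mode (l + j) (V.L1DivPow a u) (V.L1DivPow b v) = 0) (w : W.carrier) :
    ∑ i ∈ range T, cchoose m i • W.dualMode (m + n - i) (V.mode (l + i) u v) w
      = (-1 : ℂ) ^ (h + k - l - 1) • ∑ a ∈ range T, ∑ b ∈ range T, ∑ r ∈ range T,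
          cchoose (2 * h - l - m - 2 - a) r •
            W.mode ((2 * h - l - m - 2 - a) + (2 * k - l - n - 2 - b) - r)
              (V.mode (l + r) (V.L1DivPow a u) (V.L1DivPow b v)) w := by
  let F (a b r : ℕ) : W.carrier := W.mode ((2 * h - l - m - 2 - a) + (2 * k - l - n - 2 - b) - r)
    (V.mode (l + r) (V.L1DivPow a u) (V.L1DivPow b v)) w
  have hF (a b r : ℕ) (hr : T ≤ r) : F a b r = 0 := by
    simp only [F, hT a b r (by omega), map_zero, LinearMap.zero_apply]
  have expand (i : ℕ) : cchoose m i • W.dualMode (m + n - i) (V.mode (l + i) u v) w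
      = (-1 : ℂ) ^ (h + k - l - 1) • ∑ a ∈ range T, ∑ b ∈ range T, ∑ s ∈ range T,
          ((-1 : ℂ) ^ i * cchoose m i * cchoose (2 * h - l - 2 - a - i) s) • F a b (i + s) := by
    have hsign : (-1 : ℂ) ^ (h + k - (l + i) - 1) = (-1) ^ (h + k - l - 1) * (-1) ^ i := by
      rw [show h + k - (l + i) - 1 = (h + k - l - 1) - i by ring, zpow_sub₀ (by norm_num),
        zpow_natCast, div_eq_mul_inv, ← inv_pow, inv_neg_one]
    rw [dualMode_mode hu hv _ _ (T := T)
      (fun a b s hs => by simpa [add_assoc] using hT a b (i + s) (by omega)), hsign]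
    simp only [smul_sum, smul_smul, F]
    refine sum_congr rfl fun a _ => sum_congr rfl fun b _ => sum_congr rfl fun s _ => ?_
    congr 1
    · rw [show 2 * h - (l + i) - 2 - a = 2 * h - l - 2 - a - i by ring]
      ring
    · congr 3
      · push_cast; ring
      · push_cast; ring_nf
  simp only [expand, ← smul_sum]
  congr 1
  rw [sum_comm]
  refine sum_congr rfl fun a _ => ?_
  rw [sum_comm]
  refine sum_congr rfl fun b _ => ?_
  rw [sum_range_cchoose_mul_cchoose_sub_smul m (2 * h - l - 2 - a) (hF a b)]
  refine sum_congr rfl fun r _ => ?_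
  rw [show 2 * h - l - 2 - a - m = 2 * h - l - m - 2 - a by ring]

theorem dualMode_dualMode (hu : u ∈ V.wtSpace h) (hv : v ∈ V.wtSpace k) {T : ℕ}
    (huT : ∀ a, T ≤ a → V.L1DivPow a u = 0) (hvT : ∀ b, T ≤ b → V.L1DivPow b v = 0) (p q : ℤ)
    (w : W.carrier) :
    W.dualMode p u (W.dualMode q v w)
      = (-1 : ℂ) ^ (h + k) • ∑ a ∈ range T, ∑ b ∈ range T,
          W.mode (2 * h - p - a - 2) (V.L1DivPow a u)
            (W.mode (2 * k - q - b - 2) (V.L1DivPow b v) w) := by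
  rw [dualMode_apply_of_mem hu huT, dualMode_apply_of_mem hv hvT, zpow_add₀ (by norm_num),
    mul_smul, smul_comm]
  simp only [LinearMap.smul_apply, LinearMap.sum_apply, map_smul, map_sum, smul_sum]
  exact sum_comm

theorem dualMode_dualMode_sub (hu : u ∈ V.wtSpace h) (hv : v ∈ V.wtSpace k) {T : ℕ}
    (huT : ∀ a, T ≤ a → V.L1DivPow a u = 0) (hvT : ∀ b, T ≤ b → V.L1DivPow b v = 0)
    (l p p' q q' : ℤ) (w : W.carrier) :
    W.dualMode q v (W.dualMode p' u w) - (-1 : ℂ) ^ l • W.dualMode p u (W.dualMode q' v w)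
      = (-1 : ℂ) ^ (h + k - l - 1) • ∑ a ∈ range T, ∑ b ∈ range T,
          (W.mode (2 * h - p - a - 2) (V.L1DivPow a u)
              (W.mode (2 * k - q' - b - 2) (V.L1DivPow b v) w)
            - (-1 : ℂ) ^ l • W.mode (2 * k - q - b - 2) (V.L1DivPow b v)
                (W.mode (2 * h - p' - a - 2) (V.L1DivPow a u) w)) := by
  have hsign : (-1 : ℂ) ^ (h + k) = -((-1) ^ (h + k - l - 1) * (-1) ^ l) := by
    rw [← zpow_add₀ (by norm_num), show h + k - l - 1 + l = h + k - 1 by ring,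
      zpow_sub_one₀ (by norm_num), inv_neg_one, mul_neg_one, neg_neg]
  have hl : (-1 : ℂ) ^ l * (-1) ^ l = 1 := by simp [← mul_zpow]
  rw [dualMode_dualMode hu hv huT hvT, dualMode_dualMode hv hu hvT huT, add_comm k h, sum_comm,
    hsign]
  simp only [sum_sub_distrib, ← smul_sum]
  match_scalars
  · ring
  · linear_combination (-1 : ℂ) ^ (h + k - l - 1) * hl

theorem eventually_dualMode_borcherds_of_mem (hu : u ∈ V.wtSpace h) (hv : v ∈ V.wtSpace k)
    (l m n : ℤ) (w : W.carrier) :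
    ∀ᶠ T in atTop,
      ∑ i ∈ range T, cchoose m i • W.dualMode (m + n - i) (V.mode (l + i) u v) w
        = ∑ i ∈ range T, ((-1 : ℂ) ^ i * cchoose l i) •
            (W.dualMode (n + i) v (W.dualMode (l + m - i) u w)
              - (-1 : ℂ) ^ l • W.dualMode (m + i) u (W.dualMode (l + n - i) v w)) := by
  obtain ⟨K, hK⟩ := eventually_atTop.1
    ((V.eventually_L1DivPow_eq_zero h).and (V.eventually_L1DivPow_eq_zero k))
  have huK (a : ℕ) (ha : K ≤ a) : V.L1DivPow a u = 0 := (hK a ha).1 u hu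
  have hvK (b : ℕ) (hb : K ≤ b) : V.L1DivPow b v = 0 := (hK b hb).2 v hv
  have hzero : ∀ᶠ T in atTop, ∀ a b : ℕ, ∀ j : ℕ, T ≤ a + b + j →
      V.mode (l + j) (V.L1DivPow a u) (V.L1DivPow b v) = 0 := by
    refine eventually_forall₂_of_forall_le (K := K) (fun a b => ?_) ?_
    · obtain ⟨J, hJ⟩ := eventually_atTop.1
        (V.eventually_mode_eq_zero (V.L1DivPow a u) (V.L1DivPow b v) l)
      filter_upwards [eventually_ge_atTop (a + b + J)] with T hT j hj
      exact hJ j (by omega)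
    · rintro a b T (ha | hb) j -
      · rw [huK a ha, map_zero, LinearMap.zero_apply]
      · rw [hvK b hb, map_zero]
  have hborcherds := eventually_forall₂_of_forall_le (K := K)
    (fun a b => W.eventually_borcherds (V.L1DivPow a u) (V.L1DivPow b v) w l
      (2 * h - l - m - 2 - a) (2 * k - l - n - 2 - b)) (by
    rintro a b T (ha | hb)
    · simp [huK a ha]
    · simp [hvK b hb])
  filter_upwards [hzero, hborcherds, eventually_ge_atTop K] with T hT hB hKT
  have huT (a : ℕ) (ha : T ≤ a) := huK a (hKT.trans ha)
  have hvT (b : ℕ) (hb : T ≤ b) := hvK b (hKT.trans hb)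
  simp only [sum_cchoose_smul_dualMode_mode hu hv l m n hT, hB, smul_sum]
  rw [sum_congr rfl fun a _ => sum_comm, sum_comm]
  refine sum_congr rfl fun i _ => ?_
  rw [dualMode_dualMode_sub hu hv huT hvT, smul_comm]
  simp only [smul_sum]
  refine sum_congr rfl fun a _ => sum_congr rfl fun b _ => ?_
  rw [show l + (2 * h - l - m - 2 - a) - i = 2 * h - (m + i) - a - 2 by ring,
    show 2 * k - l - n - 2 - b + i = 2 * k - (l + n - i) - b - 2 by ring,
    show l + (2 * k - l - n - 2 - b) - i = 2 * k - (n + i) - b - 2 by ring,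
    show 2 * h - l - m - 2 - a + i = 2 * h - (l + m - i) - a - 2 by ring]

theorem eventually_dualMode_borcherds (u v : V.carrier) (w : W.carrier) (l m n : ℤ) :
    ∀ᶠ T in atTop,
      ∑ i ∈ range T, cchoose m i • W.dualMode (m + n - i) (V.mode (l + i) u v) w
        = ∑ i ∈ range T, ((-1 : ℂ) ^ i * cchoose l i) •
            (W.dualMode (n + i) v (W.dualMode (l + m - i) u w)
              - (-1 : ℂ) ^ l • W.dualMode (m + i) u (W.dualMode (l + n - i) v w)) := by
  induction u using VOA.induction_on_homogeneous with
  | add u₁ u₂ h₁ h₂ =>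
    filter_upwards [h₁, h₂] with T h₁ h₂
    simp only [map_add, LinearMap.add_apply, smul_add, sum_add_distrib, h₁, h₂]
    rw [← sum_add_distrib]
    exact sum_congr rfl fun i _ => by module
  | homogeneous h u hu =>
    induction v using VOA.induction_on_homogeneous with
    | add v₁ v₂ h₁ h₂ =>
      filter_upwards [h₁, h₂] with T h₁ h₂
      simp only [map_add, LinearMap.add_apply, smul_add, sum_add_distrib, h₁, h₂]
      rw [← sum_add_distrib]
      exact sum_congr rfl fun i _ => by module
    | homogeneous k v hv => exact eventually_dualMode_borcherds_of_mem hu hv l m n w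

theorem eventually_dualMode_comm (u v : V.carrier) (w : W.carrier) (m n : ℤ) :
    ∀ᶠ T in atTop,
      W.dualMode n v (W.dualMode m u w) - W.dualMode m u (W.dualMode n v w)
        = ∑ i ∈ range T, cchoose m i • W.dualMode (m + n - i) (V.mode i u v) w := by
  filter_upwards [eventually_dualMode_borcherds u v w 0 m n, eventually_gt_atTop 0] with T h hT
  simpa [cchoose_zero_left, hT] using h.symm

end WeakModule

/-! ### The weak module `D(W)` -/

namespace WeakModule

variable {V : VOA} (W : WeakModule V)

/-- The subspace `D(W)` of the full dual of `W`, on which the adjoint vertex operators satisfy the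
truncation condition. -/
def dualSubmodule : Submodule ℂ (Module.Dual ℂ W.carrier) where
  carrier := {α | ∀ v : V.carrier, ∀ᶠ n in atTop, α ∘ₗ W.dualMode n v = 0}
  zero_mem' v := Eventually.of_forall fun n => LinearMap.zero_comp _
  add_mem' {α β} hα hβ v := by
    filter_upwards [hα v, hβ v] with n hαn hβn
    rw [LinearMap.add_comp, hαn, hβn, add_zero]
  smul_mem' c α hα v := by
    filter_upwards [hα v] with n hn
    rw [LinearMap.smul_comp, hn, smul_zero]

variable {W}

theorem comp_dualMode_mem {α : Module.Dual ℂ W.carrier} (hα : α ∈ W.dualSubmodule) (u : V.carrier)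
    (n : ℤ) : α ∘ₗ W.dualMode n u ∈ W.dualSubmodule := by
  intro v
  obtain ⟨A, hA⟩ := eventually_atTop.1 (V.eventually_mode_eq_zero v u 0)
  have hlow : ∀ᶠ p : ℤ in atTop, ∀ i ∈ range A, α ∘ₗ W.dualMode (p + n - i) (V.mode i v u) = 0 := by
    refine (range A).eventually_all.2 fun i _ => ?_
    simpa only [add_sub_assoc, id_eq] using
      (tendsto_atTop_add_const_right atTop (n - i : ℤ) tendsto_id).eventually (hα (V.mode i v u))
  filter_upwards [hα v, hlow] with p hp hlow
  ext w
  obtain ⟨T, hT⟩ := (eventually_dualMode_comm v u w p n).exists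
  have hzero : ∑ i ∈ range T, cchoose p i • α (W.dualMode (p + n - i) (V.mode i v u) w) = 0 := by
    refine sum_eq_zero fun i _ => ?_
    by_cases hi : i < A
    · have hi := LinearMap.congr_fun (hlow i (mem_range.2 hi)) w
      rw [LinearMap.comp_apply, LinearMap.zero_apply] at hi
      rw [hi, smul_zero]
    · have hi := hA i (not_lt.1 hi)
      rw [zero_add] at hi
      rw [hi, map_zero, LinearMap.zero_apply, map_zero, smul_zero]
  have h := congrArg α hT
  rw [map_sub, map_sum] at h
  simp only [map_smul, hzero] at h
  exact (sub_eq_zero.1 h).trans (LinearMap.congr_fun hp _)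

theorem finsum_dualSubmodule_eq_finsum {f g : ℕ → W.dualSubmodule} (hf : ∀ᶠ i in atTop, f i = 0)
    (hg : ∀ᶠ i in atTop, g i = 0)
    (hfg : ∀ w, ∀ᶠ T in atTop, ∑ i ∈ range T, (f i).1 w = ∑ i ∈ range T, (g i).1 w) :
    ∑ᶠ i, f i = ∑ᶠ i, g i := by
  ext w
  obtain ⟨T, ⟨hfT, hgT⟩, hT⟩ := (((eventually_sum_range_eq_finsum hf).and
    (eventually_sum_range_eq_finsum hg)).and (hfg w)).exists
  rw [← hfT, ← hgT]
  simpa using hT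

variable (W)

/-- The weak `V`-module structure on `D(W)` given by the adjoint vertex operators. -/
@[reducible] def dual : WeakModule V where
  carrier := W.dualSubmodule
  op v n α := ⟨α.1 ∘ₗ W.dualMode n v, comp_dualMode_mem α.2 v n⟩
  op_linear_left n α := by constructor <;> intros <;> ext w <;> simp
  op_linear_right u n := by constructor <;> intros <;> ext w <;> simp
  trunc u α := by
    obtain ⟨N, hN⟩ := eventually_atTop.1 (α.2 u)
    exact ⟨N, fun n hn => Subtype.ext (hN n hn)⟩
  one_op n α := by
    ext w
    rw [LinearMap.comp_apply, dualMode_one]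
    split_ifs <;> simp
  borcherds u v α l m n := by
    have htrunc (u : V.carrier) (n : ℤ) : ∀ᶠ i : ℕ in atTop, α.1 ∘ₗ W.dualMode (n + i) u = 0 :=
      eventually_atTop_of_forall_le (eventually_atTop.1 (α.2 u)) n
    refine finsum_dualSubmodule_eq_finsum ?_ ?_ fun w => ?_
    · filter_upwards [V.eventually_mode_eq_zero u v l] with i hi
      ext w
      simp [← V.mode_apply, hi]
    · filter_upwards [htrunc u m, htrunc v n] with i hu hv
      ext w
      simp [hu, hv]
    · filter_upwards [eventually_dualMode_borcherds u v w l m n] with T hT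
      simpa [V.mode_apply] using congrArg α.1 hT

theorem dual_L0_apply (α : W.dual.carrier) (w : W.carrier) :
    (W.dual.L0 α).1 w = α.1 (W.L0 w) := by
  rw [← W.dualMode_omega_one]
  rfl

end WeakModule

/-! ### Weights outside `C₂(W)` -/

namespace WeakModule

variable {V : VOA} (W : WeakModule V)

theorem mode_neg_two_mem_Cn (u : V.carrier) (w : W.carrier) : W.mode (-2) u w ∈ W.Cn 2 :=
  Submodule.subset_span ⟨u, w, rfl⟩

theorem mode_mem_Cn_two {n : ℤ} (hn : n ≤ -2) (u : V.carrier) (w : W.carrier) :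
    W.mode n u w ∈ W.Cn 2 := by
  induction n, hn using Int.leInductionDown generalizing u with
  | base => exact W.mode_neg_two_mem_Cn u w
  | pred n hn ih =>
    have hn0 : (-(n : ℂ)) ≠ 0 := neg_ne_zero.2 (by norm_cast; omega)
    have h := ih (V.mode 0 V.omega u)
    rwa [mode_derivative, Submodule.smul_mem_iff _ hn0] at h

theorem L0_mem_Cn_two {w : W.carrier} (hw : w ∈ W.Cn 2) : W.L0 w ∈ W.Cn 2 := by
  suffices W.Cn 2 ≤ (W.Cn 2).comap W.L0 from this hw
  refine Submodule.span_le.2 ?_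
  rintro _ ⟨u, w, rfl⟩
  change W.L0 (W.mode (-2) u w) ∈ W.Cn 2
  induction u using VOA.induction_on_homogeneous with
  | add u v hu hv => simpa only [map_add, LinearMap.add_apply] using add_mem hu hv
  | homogeneous k u hu =>
    rw [L0_mode W hu]
    exact add_mem (W.mode_neg_two_mem_Cn _ _) (Submodule.smul_mem _ _ (W.mode_neg_two_mem_Cn _ _))

theorem eventually_dualMode_mem_Cn_two (v : V.carrier) :
    ∀ᶠ n in atTop, ∀ w, W.dualMode n v w ∈ W.Cn 2 := by
  induction v using VOA.induction_on_homogeneous with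
  | add u v hu hv =>
    filter_upwards [hu, hv] with n hu hv w
    simpa only [map_add, LinearMap.add_apply] using add_mem (hu w) (hv w)
  | homogeneous h v hv =>
    obtain ⟨T, hT⟩ := eventually_atTop.1 (V.eventually_L1DivPow_eq_zero h)
    filter_upwards [eventually_ge_atTop (2 * h)] with n hn w
    rw [dualMode_apply_of_mem hv fun i hi => hT i hi v hv, LinearMap.smul_apply,
      LinearMap.sum_apply]
    exact Submodule.smul_mem _ _ (sum_mem fun i _ => W.mode_mem_Cn_two (by omega) _ _)

variable {W}

theorem mem_dualSubmodule_of_Cn_two_le_ker {α : Module.Dual ℂ W.carrier}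
    (hα : W.Cn 2 ≤ LinearMap.ker α) : α ∈ W.dualSubmodule := by
  intro v
  filter_upwards [W.eventually_dualMode_mem_Cn_two v] with n hn
  ext w
  exact hα (hn w)

theorem apply_eq_zero_of_mem_dual_eig {g h : ℂ} (hgh : g ≠ h) {α : W.dual.carrier}
    (hα : α ∈ W.dual.eig h) {w : W.carrier} (hw : w ∈ W.eig g) : α.1 w = 0 := by
  have hL : α.1 (W.L0 w) = h * α.1 w := by
    rw [← dual_L0_apply, mem_eig.1 hα]
    rfl
  rw [mem_eig.1 hw, map_smul, smul_eq_mul, mul_eq_mul_right_iff] at hL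
  exact hL.resolve_left hgh

theorem finite_setOf_dual_apply_ne_zero (hV : V.classA) (α : W.dual.carrier) :
    {g | ∃ w ∈ W.eig g, α.1 w ≠ 0}.Finite := by
  induction (hV W.dual ▸ Submodule.mem_top : α ∈ ⨆ h, W.dual.eig h)
    using Submodule.iSup_induction' with
  | mem h α hα =>
    refine (Set.finite_singleton h).subset ?_
    rintro g ⟨w, hw, hαw⟩
    by_contra hgh
    exact hαw (apply_eq_zero_of_mem_dual_eig hgh hα hw)
  | zero => simp
  | add α β _ _ hα hβ =>
    refine (hα.union hβ).subset ?_
    rintro g ⟨w, hw, hαβ⟩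
    by_contra! h
    simp only [Set.mem_union, Set.mem_ofPred_eq, not_or, not_exists, not_and, not_not] at h
    exact hαβ (by simp [h.1 w hw, h.2 w hw])

/-- The weights `g` for which `C₂(W)` does not contain the `L(0)`-eigenspace of weight `g`. -/
def exceptionalWeights (W : WeakModule V) : Set ℂ := {g | ¬ W.eig g ≤ W.Cn 2}

theorem exists_dual_apply_eq_one (x : W.exceptionalWeights → W.carrier) (hx : ∀ g, x g ∈ W.eig g.1)
    (hxC : ∀ g, x g ∉ W.Cn 2) :
    ∃ α : Module.Dual ℂ W.carrier, W.Cn 2 ≤ LinearMap.ker α ∧ ∀ g, α (x g) = 1 := by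
  let L : Module.End ℂ (W.carrier ⧸ W.Cn 2) := (W.Cn 2).mapQ _ W.L0 fun _ => W.L0_mem_Cn_two
  have hli : LinearIndependent ℂ fun g => (W.Cn 2).mkQ (x g) := by
    refine Module.End.eigenvectors_linearIndependent' L _ Subtype.val_injective _ fun g => ?_
    refine Module.End.hasEigenvector_iff.2 ⟨Module.End.mem_eigenspace_iff.2 ?_, ?_⟩
    · simp [L, mem_eig.1 (hx g)]
    · simpa using hxC g
  obtain ⟨φ, hφ⟩ := LinearMap.exists_extend
    (Finsupp.linearCombination ℂ (fun _ => (1 : ℂ)) ∘ₗ hli.repr)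
  refine ⟨φ ∘ₗ (W.Cn 2).mkQ, fun w hw => ?_, fun g => ?_⟩
  · simp [(Submodule.Quotient.mk_eq_zero _).2 hw]
  · have hmem : (W.Cn 2).mkQ (x g) ∈ Submodule.span ℂ (Set.range fun g => (W.Cn 2).mkQ (x g)) :=
      Submodule.subset_span ⟨g, rfl⟩
    calc φ ((W.Cn 2).mkQ (x g))
        = Finsupp.linearCombination ℂ (fun _ => (1 : ℂ))
            (hli.repr ⟨_, hmem⟩) := LinearMap.congr_fun hφ ⟨_, hmem⟩
      _ = 1 := by
        rw [hli.repr_eq_single g _ rfl, Finsupp.linearCombination_single, one_smul]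

/-- A functional that is nonzero in infinitely many weights and vanishes on `C₂(W)` would be an
element of `D(W)` that is not a finite sum of eigenvectors of `L(0)`. -/
theorem finite_exceptionalWeights (hV : V.classA) (W : WeakModule V) :
    W.exceptionalWeights.Finite := by
  choose x hx hxC using fun g : W.exceptionalWeights => SetLike.not_le_iff_exists.1 g.2
  obtain ⟨α, hα, hα1⟩ := exists_dual_apply_eq_one x hx hxC
  refine (finite_setOf_dual_apply_ne_zero hV
    ⟨α, mem_dualSubmodule_of_Cn_two_le_ker hα⟩).subset fun g hg => ?_
  exact ⟨x ⟨g, hg⟩, hx ⟨g, hg⟩, by simp [hα1]⟩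

end WeakModule

/-! ### Ordinary modules and `W / O(W)` -/

namespace WeakModule

variable {V : VOA} (W : WeakModule V)

/-- The weak module `W` is ordinary: `L(0)` acts semisimply with finite-dimensional eigenspaces and
its eigenvalues are bounded below in each coset of `ℤ`. Unlike for `OrdModule`, the grading is not
part of the data, so that this applies to a vertex operator algebra over itself. -/
structure IsOrdinary : Prop where
  iSup_eig : ⨆ h, W.eig h = ⊤
  finiteDimensional_eig : ∀ h, FiniteDimensional ℂ (W.eig h)
  eig_eq_bot : ∀ h, ∃ N : ℤ, ∀ m : ℤ, m ≤ N → W.eig (h + m) = ⊥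

theorem eventually_sum_mem_OW {k : ℤ} {u : V.carrier} (hu : u ∈ V.wtSpace k) (w : W.carrier) :
    ∀ᶠ T in atTop, ∑ i ∈ range T, cchoose k i • W.mode (-2 + i) u w ∈ W.OW := by
  have hzero : ∀ᶠ i : ℕ in atTop, cchoose k i • W.mode (-2 + i) u w = 0 :=
    (W.eventually_mode_eq_zero u w (-2)).mono fun i hi => by rw [hi, smul_zero]
  filter_upwards [eventually_sum_range_eq_finsum hzero] with T hT
  rw [hT]
  exact Submodule.subset_span ⟨k, u, hu, w, by simp only [neg_add_eq_sub, mode_apply]⟩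

variable {W} in
theorem mode_neg_two_mem_of_OW_le {S : Submodule ℂ W.carrier} (hS : W.OW ≤ S) {k : ℤ}
    {u : V.carrier} (hu : u ∈ V.wtSpace k) {g : ℂ} {w : W.carrier} (hw : w ∈ W.eig g)
    (hlow : ∀ i : ℕ, W.eig (g + (k - -2 - 1 : ℤ) - (i + 1)) ≤ S) : W.mode (-2) u w ∈ S := by
  obtain ⟨T, hT⟩ := (W.eventually_sum_mem_OW hu w).exists_forall_of_atTop
  have h := hS (hT (T + 1) T.le_succ)
  rw [sum_range_succ', Submodule.add_mem_iff_right] at h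
  · simpa using h
  · refine sum_mem fun i _ => Submodule.smul_mem _ _ (hlow i ?_)
    convert mode_mem_eig hu (-2 + (i + 1 : ℕ)) hw using 2
    push_cast
    ring

namespace IsOrdinary

variable {W} (hW : W.IsOrdinary)

include hW

theorem induction_on_homogeneous {p : W.carrier → Prop} (w : W.carrier)
    (homogeneous : ∀ g, ∀ w ∈ W.eig g, p w) (add : ∀ x y, p x → p y → p (x + y)) : p w :=
  Submodule.iSup_induction (motive := p) W.eig (hW.iSup_eig ▸ Submodule.mem_top) homogeneous
    (homogeneous 0 0 (zero_mem _)) add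

theorem OW_le {S : Submodule ℂ W.carrier}
    (hS : ∀ k, ∀ u ∈ V.wtSpace k, ∀ g, ∀ w ∈ W.eig g,
      ∀ᶠ T in atTop, ∑ i ∈ range T, cchoose k i • W.mode (-2 + i) u w ∈ S) : W.OW ≤ S := by
  refine Submodule.span_le.2 ?_
  rintro _ ⟨k, u, hu, w, rfl⟩
  have hmem : ∀ᶠ T in atTop, ∑ i ∈ range T, cchoose k i • W.mode (-2 + i) u w ∈ S := by
    induction w using hW.induction_on_homogeneous with
    | homogeneous g w hw => exact hS k u hu g w hw
    | add x y hx hy =>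
      filter_upwards [hx, hy] with T hx hy
      simpa only [map_add, smul_add, sum_add_distrib] using add_mem hx hy
  have hzero : ∀ᶠ i : ℕ in atTop, cchoose k i • W.mode (-2 + i) u w = 0 :=
    (W.eventually_mode_eq_zero u w (-2)).mono fun i hi => by rw [hi, smul_zero]
  obtain ⟨T, hT, hTS⟩ := ((eventually_sum_range_eq_finsum hzero).and hmem).exists
  rw [hT] at hTS
  simpa only [neg_add_eq_sub, mode_apply, SetLike.mem_coe] using hTS

theorem weight_induction {p : ℂ → Prop} (bot : ∀ g, W.eig g = ⊥ → p g)
    (step : ∀ g, (∀ i : ℕ, p (g - (i + 1))) → p g) (g : ℂ) : p g := by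
  obtain ⟨N, hN⟩ := hW.eig_eq_bot g
  suffices h : ∀ n : ℕ, ∀ m : ℤ, m ≤ N + n → p (g + m) by
    simpa using h N.natAbs 0 (by omega)
  intro n
  induction n with
  | zero => exact fun m hm => bot _ (hN m (by simpa using hm))
  | succ n ih =>
    intro m hm
    refine step _ fun i => ?_
    have h := ih (m - (i + 1)) (by push_cast at hm; omega)
    push_cast at h
    rwa [← add_sub_assoc] at h

/-- The projection of an ordinary module onto its weight space of weight `g`. -/
def proj (g : ℂ) : W.carrier →ₗ[ℂ] W.eig g := projOfIndep W.iSupIndep_eig hW.iSup_eig g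

theorem proj_apply_of_mem {g : ℂ} {w : W.carrier} (hw : w ∈ W.eig g) : hW.proj g w = ⟨w, hw⟩ :=
  projOfIndep_apply_of_mem _ _ hw

theorem proj_apply_of_ne {g h : ℂ} (hgh : g ≠ h) {w : W.carrier} (hw : w ∈ W.eig g) :
    hW.proj h w = 0 :=
  projOfIndep_apply_of_ne _ _ hgh hw

theorem inf_Cn_two_le {S : Submodule ℂ W.carrier} (hS : W.OW ≤ S) {g : ℂ}
    (hlow : ∀ i : ℕ, W.eig (g - (i + 1)) ≤ S) : W.eig g ⊓ W.Cn 2 ≤ S := by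
  suffices hproj : W.Cn 2 ≤ S.comap ((W.eig g).subtype ∘ₗ hW.proj g) by
    rintro w ⟨hwg, hwC⟩
    have h : (hW.proj g w : W.carrier) ∈ S := hproj hwC
    rwa [hW.proj_apply_of_mem hwg] at h
  refine Submodule.span_le.2 ?_
  rintro _ ⟨u, w, rfl⟩
  change (hW.proj g (W.mode (-2) u w) : W.carrier) ∈ S
  induction u using VOA.induction_on_homogeneous with
  | add u v hu hv =>
    simpa only [map_add, LinearMap.add_apply, Submodule.coe_add] using add_mem hu hv
  | homogeneous k u hu =>
    induction w using hW.induction_on_homogeneous with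
    | add x y hx hy => simpa only [map_add, Submodule.coe_add] using add_mem hx hy
    | homogeneous f w hw =>
      have hmem := mode_mem_eig hu (-2) hw
      by_cases hg : f + (k - -2 - 1 : ℤ) = g
      · subst hg
        rw [hW.proj_apply_of_mem hmem]
        exact mode_neg_two_mem_of_OW_le hS hu hw hlow
      · rw [hW.proj_apply_of_ne hg hmem]
        exact zero_mem S

theorem OW_sup_iSup_exceptionalWeights :
    W.OW ⊔ ⨆ g : W.exceptionalWeights, W.eig g = ⊤ := by
  rw [eq_top_iff, ← hW.iSup_eig]
  refine iSup_le fun g => ?_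
  induction g using hW.weight_induction with
  | bot g hg => exact hg ▸ bot_le
  | step g hlow =>
    by_cases hg : g ∈ W.exceptionalWeights
    · exact le_sup_of_le_right (le_iSup (fun g : W.exceptionalWeights => W.eig g) ⟨g, hg⟩)
    · exact (le_inf le_rfl (not_not.1 hg)).trans (hW.inf_Cn_two_le le_sup_left hlow)

theorem finiteDimensional_quotient_OW (hV : V.classA) :
    FiniteDimensional ℂ (W.carrier ⧸ W.OW) := by
  have := (finite_exceptionalWeights hV W).to_subtype
  have := hW.finiteDimensional_eig
  have hsurj : Function.Surjective
      (W.OW.mkQ ∘ₗ (⨆ g : W.exceptionalWeights, W.eig g).subtype) := by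
    rw [← LinearMap.range_eq_top, LinearMap.range_comp, Submodule.range_subtype,
      ← Submodule.comap_injective_of_surjective W.OW.mkQ_surjective |>.eq_iff]
    simpa only [Submodule.comap_map_eq, Submodule.ker_mkQ, Submodule.comap_top, sup_comm] using
      hW.OW_sup_iSup_exceptionalWeights
  exact Module.Finite.of_surjective _ hsurj

end IsOrdinary

end WeakModule

theorem GenModule.iSup_wt {V : VOA} (W : GenModule V) : ⨆ h, W.wt h = ⊤ := by
  refine eq_top_iff.2 fun w _ => ?_
  rw [← W.projW_sum w, finsum_eq_sum _ (W.projW_finite w)]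
  exact sum_mem fun h _ => Submodule.mem_iSup_of_mem h (W.projW_mem h w)

theorem GenModule.wt_eq_eig {V : VOA} (W : GenModule V) : W.wt = W.toWeakModule.eig :=
  eq_of_le_of_iSupIndep_of_iSup_eq_top W.iSupIndep_eig
    (fun h w hw => WeakModule.mem_eig.2 (W.wt_L0 h w hw)) W.iSup_wt

theorem OrdModule.isOrdinary {V : VOA} (W : OrdModule V) : W.toWeakModule.IsOrdinary where
  iSup_eig := W.wt_eq_eig ▸ W.iSup_wt
  finiteDimensional_eig := W.wt_eq_eig ▸ W.wt_fd
  eig_eq_bot := W.wt_eq_eig ▸ W.wt_lower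

namespace VOA

variable (V : VOA)

theorem adjoint_eig (c : ℂ) : V.adjoint.eig c = ⨆ (n : ℤ) (_ : (n : ℂ) = c), V.wtSpace n := by
  have heig : (fun c : ℂ => ⨆ (n : ℤ) (_ : (n : ℂ) = c), V.wtSpace n) = V.adjoint.eig := by
    refine eq_of_le_of_iSupIndep_of_iSup_eq_top V.adjoint.iSupIndep_eig (fun c => ?_) ?_
    · refine iSup₂_le ?_
      rintro n rfl
      exact V.wtSpace_le_eig n
    · rw [iSup_comm, ← V.iSup_wtSpace]
      exact iSup_congr fun n => iSup_iSup_eq_right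
  exact (congrFun heig c).symm

theorem adjoint_eig_intCast (n : ℤ) : V.adjoint.eig n = V.wtSpace n := by
  simp only [adjoint_eig, Int.cast_inj, iSup_iSup_eq_left]

theorem adjoint_eig_eq_bot {c : ℂ} (hc : ∀ n : ℤ, (n : ℂ) ≠ c) : V.adjoint.eig c = ⊥ := by
  simp only [adjoint_eig, hc, iSup_false, iSup_bot]

theorem adjoint_isOrdinary : V.adjoint.IsOrdinary where
  iSup_eig := by
    refine eq_top_iff.2 (V.iSup_wtSpace.symm.le.trans (iSup_le fun n => ?_))
    exact (V.wtSpace_le_eig n).trans (le_iSup V.adjoint.eig n)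
  finiteDimensional_eig c := by
    by_cases hc : ∃ n : ℤ, (n : ℂ) = c
    · obtain ⟨n, rfl⟩ := hc
      exact V.adjoint_eig_intCast n ▸ V.fd n
    · rw [V.adjoint_eig_eq_bot (not_exists.1 hc)]
      infer_instance
  eig_eq_bot c := by
    by_cases hc : ∃ n : ℤ, (n : ℂ) = c
    · obtain ⟨n, rfl⟩ := hc
      obtain ⟨N, hN⟩ := V.lower_trunc
      refine ⟨N - n - 1, fun m hm => ?_⟩
      rw [← Int.cast_add, V.adjoint_eig_intCast, hN _ (by omega)]
    · refine ⟨0, fun m _ => V.adjoint_eig_eq_bot fun n hn => hc ⟨n - m, ?_⟩⟩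
      rw [Int.cast_sub, hn, add_sub_cancel_right]

end VOA

namespace WeakModule

variable {V : VOA} {W : WeakModule V}

theorem IsOrdinary.exists_lowest_weight (hW : W.IsOrdinary)
    (hne : (⊥ : Submodule ℂ W.carrier) ≠ ⊤) :
    ∃ h, W.eig h ≠ ⊥ ∧ ∀ i : ℕ, W.eig (h - (i + 1)) = ⊥ := by
  by_contra! hlow
  have hbot (g : ℂ) : W.eig g = ⊥ :=
    hW.weight_induction (p := fun g => W.eig g = ⊥) (fun _ => id)
      (fun g hg => not_not.1 fun hne => (hlow g hne).elim fun i hi => hi (hg i)) g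
  exact hne (by rw [← hW.iSup_eig, iSup_congr hbot, iSup_bot])

theorem isStable_span {s : Set W.carrier}
    (hs : ∀ u n, ∀ x ∈ s, W.mode n u x ∈ Submodule.span ℂ s) : W.IsStable (Submodule.span ℂ s) :=
  fun u n _ hx => Submodule.span_le (p := (Submodule.span ℂ s).comap (W.mode n u)).2 (hs u n) hx

theorem mode_mem_of_eventually_sum_mem {S : Submodule ℂ W.carrier} {u : V.carrier}
    {x : ℕ → W.carrier} (hx : ∀ᶠ j in atTop, x j = 0)
    (hS : ∀ (j : ℕ) (p : ℤ), ∃ c : ℕ → ℂ, c 0 = 1 ∧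
      ∀ᶠ T in atTop, ∑ i ∈ range T, c i • W.mode (p - i) u (x (j + i)) ∈ S)
    (j : ℕ) (p : ℤ) : W.mode p u (x j) ∈ S := by
  obtain ⟨N, hN⟩ := eventually_atTop.1 hx
  induction hd : N - j using Nat.strong_induction_on generalizing j p with
  | h d ih =>
    by_cases hj : N ≤ j
    · rw [hN j hj, map_zero]
      exact zero_mem S
    obtain ⟨c, hc, hT⟩ := hS j p
    obtain ⟨T, hT⟩ := hT.exists_forall_of_atTop
    have h := hT (T + 1) T.le_succ
    rw [sum_range_succ', Submodule.add_mem_iff_right] at h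
    · simpa [hc] using h
    · exact sum_mem fun i _ => S.smul_mem _ (ih _ (by omega) (j + (i + 1)) _ rfl)

end WeakModule

/-! ### Finiteness of fusion rules -/

theorem finiteDimensional_of_injective_of_le_ker {k X M E : Type*} [Field k] [AddCommGroup X]
    [Module k X] [AddCommGroup M] [Module k M] [AddCommGroup E] [Module k E]
    [FiniteDimensional k E] {K : Submodule k M} [FiniteDimensional k (M ⧸ K)]
    {f : X →ₗ[k] M →ₗ[k] E} (hf : Function.Injective f) (hK : ∀ x, K ≤ LinearMap.ker (f x)) :
    FiniteDimensional k X := by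
  have hflip : K ≤ LinearMap.ker f.flip := fun m hm => LinearMap.ext fun x => hK x hm
  refine Module.Finite.of_injective (K.liftQ f.flip hflip).flip fun x y hxy => hf ?_
  exact LinearMap.ext fun m => LinearMap.congr_fun hxy (K.mkQ m)

section Intertwiner

variable {V : VOA} {W1 W2 W3 : OrdModule V}

theorem isIntertwiner_iff {I : W1.carrier → ℂ → W2.carrier → W3.carrier} :
    IsIntertwiner W1 W2 W3 I ↔
      (∀ h w2, IsLinearMap ℂ fun w1 => I w1 h w2) ∧
      (∀ w1 h, IsLinearMap ℂ (I w1 h)) ∧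
      (∀ w1 w2 h, ∃ N : ℤ, ∀ n : ℤ, N ≤ n → I w1 (h + n) w2 = 0) ∧
      (∀ w1 h w2, I (W1.mode 0 V.omega w1) h w2 = (-h) • I w1 (h - 1) w2) ∧
      ∀ (u : V.carrier) w1 w2 (l m : ℤ) h, ∀ᶠ T in atTop,
        ∑ i ∈ range T, cchoose m i • I (W1.mode (l + i) u w1) (m + h - i) w2
          = ∑ i ∈ range T, ((-1 : ℂ) ^ i * cchoose l i) •
              (W3.mode (l + m - i) u (I w1 (h + i) w2)
                - ((-1 : ℂ) ^ l) • I w1 (l + h - i) (W2.mode (m + i) u w2)) := by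
  refine and_congr_right fun hlin1 => and_congr_right fun hlin2 => and_congr_right fun htrunc =>
    and_congr_right fun _ => ?_
  refine forall₃_congr fun u w1 w2 => forall₃_congr fun l m h =>
    finsum_eq_finsum_iff_eventually ?_ ?_
  · filter_upwards [W1.eventually_mode_eq_zero u w1 l] with i hi
    rw [← WeakModule.mode_apply, hi, (hlin1 _ w2).map_zero, smul_zero]
  · filter_upwards [eventually_atTop_of_forall_le (htrunc w1 w2 h) 0,
      W2.eventually_mode_eq_zero u w2 m] with i hi hu
    rw [zero_add, Int.cast_natCast] at hi
    rw [← WeakModule.mode_apply, ← WeakModule.mode_apply, hi, hu, map_zero, (hlin2 w1 _).map_zero,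
      smul_zero, sub_zero, smul_zero]

theorem IsIntertwiner.zero : IsIntertwiner W1 W2 W3 0 := by
  refine isIntertwiner_iff.2 ⟨fun _ _ => (0 : W1.carrier →ₗ[ℂ] W3.carrier).isLinear,
    fun _ _ => (0 : W2.carrier →ₗ[ℂ] W3.carrier).isLinear, fun _ _ _ => ⟨0, fun _ _ => rfl⟩,
    fun _ _ _ => (smul_zero _).symm, fun u w1 w2 l m h => .of_forall fun T => ?_⟩
  simp only [Pi.zero_apply, smul_zero, map_zero, sub_zero]

theorem IsIntertwiner.add {I J : W1.carrier → ℂ → W2.carrier → W3.carrier}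
    (hI : IsIntertwiner W1 W2 W3 I) (hJ : IsIntertwiner W1 W2 W3 J) :
    IsIntertwiner W1 W2 W3 (I + J) := by
  rw [isIntertwiner_iff] at hI hJ ⊢
  obtain ⟨hI1, hI2, hI3, hI4, hI5⟩ := hI
  obtain ⟨hJ1, hJ2, hJ3, hJ4, hJ5⟩ := hJ
  refine ⟨fun h w2 => ((hI1 h w2).mk' _ + (hJ1 h w2).mk' _).isLinear,
    fun w1 h => ((hI2 w1 h).mk' _ + (hJ2 w1 h).mk' _).isLinear, fun w1 w2 h => ?_,
    fun w1 h w2 => ?_, fun u w1 w2 l m h => ?_⟩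
  · obtain ⟨M, hM⟩ := hI3 w1 w2 h
    obtain ⟨N, hN⟩ := hJ3 w1 w2 h
    refine ⟨max M N, fun n hn => ?_⟩
    simp only [Pi.add_apply, hM n (by omega), hN n (by omega), add_zero]
  · simp only [Pi.add_apply, hI4, hJ4, smul_add]
  · filter_upwards [hI5 u w1 w2 l m h, hJ5 u w1 w2 l m h] with T hI hJ
    simp only [Pi.add_apply, map_add, smul_add, sum_add_distrib, hI, hJ]
    rw [← sum_add_distrib]
    exact sum_congr rfl fun i _ => by module

theorem IsIntertwiner.smul (c : ℂ) {I : W1.carrier → ℂ → W2.carrier → W3.carrier}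
    (hI : IsIntertwiner W1 W2 W3 I) : IsIntertwiner W1 W2 W3 (c • I) := by
  rw [isIntertwiner_iff] at hI ⊢
  obtain ⟨hI1, hI2, hI3, hI4, hI5⟩ := hI
  refine ⟨fun h w2 => (c • (hI1 h w2).mk' _).isLinear, fun w1 h => (c • (hI2 w1 h).mk' _).isLinear,
    fun w1 w2 h => ?_, fun w1 h w2 => ?_, fun u w1 w2 l m h => ?_⟩
  · obtain ⟨N, hN⟩ := hI3 w1 w2 h
    exact ⟨N, fun n hn => by simp only [Pi.smul_apply, hN n hn, smul_zero]⟩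
  · simp only [Pi.smul_apply, hI4, smul_comm c]
  · filter_upwards [hI5 u w1 w2 l m h] with T hI
    simp only [Pi.smul_apply, map_smul, smul_comm _ c, ← smul_sub, ← smul_sum, hI]

variable (W1 W2 W3) in
/-- The space `I(W₃; W₁, W₂)` of intertwining operators. -/
def intertwinerSpace : Submodule ℂ (W1.carrier → ℂ → W2.carrier → W3.carrier) where
  carrier := {I | IsIntertwiner W1 W2 W3 I}
  zero_mem' := IsIntertwiner.zero
  add_mem' := IsIntertwiner.add
  smul_mem' c _ := IsIntertwiner.smul c

theorem fusionFinite_iff :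
    FusionFinite W1 W2 W3 ↔ FiniteDimensional ℂ (intertwinerSpace W1 W2 W3) := by
  rw [← Submodule.span_eq (intertwinerSpace W1 W2 W3)]
  rfl

namespace intertwinerSpace

/-- The mode `(w₁)ₕ w₂` of an intertwining operator as a bilinear map, linear in the operator. -/
def mode (h : ℂ) :
    intertwinerSpace W1 W2 W3 →ₗ[ℂ] W1.carrier →ₗ[ℂ] W2.carrier →ₗ[ℂ] W3.carrier where
  toFun I := LinearMap.mk₂ ℂ (fun w1 w2 => I.1 w1 h w2)
    (fun _ _ w2 => (I.2.1 h w2).map_add _ _) (fun _ _ w2 => (I.2.1 h w2).map_smul _ _)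
    (fun w1 => (I.2.2.1 w1 h).map_add) (fun c w1 => (I.2.2.1 w1 h).map_smul c)
  map_add' _ _ := rfl
  map_smul' _ _ := rfl

variable (I : intertwinerSpace W1 W2 W3)

theorem eq_zero_of_mode_eq_zero (hI : ∀ h, mode h I = 0) : I = 0 :=
  Subtype.ext (funext fun w1 => funext fun h => funext fun w2 =>
    LinearMap.congr_fun₂ (hI h) w1 w2)

theorem eventually_mode_eq_zero (w1 : W1.carrier) (w2 : W2.carrier) (h : ℂ) :
    ∀ᶠ i : ℕ in atTop, mode (h + i) I w1 w2 = 0 := by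
  filter_upwards [eventually_atTop_of_forall_le (I.2.2.2.1 w1 w2 h) 0] with i hi
  rwa [zero_add, Int.cast_natCast] at hi

theorem mode_derivative (w1 : W1.carrier) (w2 : W2.carrier) (h : ℂ) :
    mode h I (W1.mode 0 V.omega w1) w2 = (-h) • mode (h - 1) I w1 w2 :=
  I.2.2.2.2.1 w1 h w2

theorem eventually_borcherds (u : V.carrier) (w1 : W1.carrier) (w2 : W2.carrier) (l m : ℤ)
    (h : ℂ) :
    ∀ᶠ T in atTop,
      ∑ i ∈ range T, cchoose m i • mode (m + h - i) I (W1.mode (l + i) u w1) w2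
        = ∑ i ∈ range T, ((-1 : ℂ) ^ i * cchoose l i) •
            (W3.mode (l + m - i) u (mode (h + i) I w1 w2)
              - ((-1 : ℂ) ^ l) • mode (l + h - i) I w1 (W2.mode (m + i) u w2)) :=
  (isIntertwiner_iff.1 I.2).2.2.2.2 u w1 w2 l m h

theorem eventually_mode_comm (u : V.carrier) (w1 : W1.carrier) (w2 : W2.carrier) (m : ℤ) (h : ℂ) :
    ∀ᶠ T in atTop,
      W3.mode m u (mode h I w1 w2) - mode h I w1 (W2.mode m u w2)
        = ∑ i ∈ range T, cchoose m i • mode (m + h - i) I (W1.mode i u w1) w2 := by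
  filter_upwards [eventually_borcherds I u w1 w2 0 m h, eventually_gt_atTop 0] with T hT hpos
  simpa [cchoose_zero_left, hpos] using hT.symm

theorem mode_mem_eig {h1 h2 : ℂ} {w1 : W1.carrier} {w2 : W2.carrier} (hw1 : w1 ∈ W1.eig h1)
    (hw2 : w2 ∈ W2.eig h2) (h : ℂ) : mode h I w1 w2 ∈ W3.eig (h1 + h2 - h - 1) := by
  obtain ⟨T, hT, hpos⟩ :=
    ((eventually_mode_comm I V.omega w1 w2 1 h).and (eventually_gt_atTop 1)).exists
  have hsum := sum_range_cchoose_natCast_smul 1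
    (fun i => mode (1 + h - i) I (W1.mode i V.omega w1) w2) hpos
  have hL1 : W1.mode 1 V.omega w1 = h1 • w1 := WeakModule.mem_eig.1 hw1
  have hL2 : W2.mode 1 V.omega w2 = h2 • w2 := WeakModule.mem_eig.1 hw2
  have hL3 : W3.mode 1 V.omega (mode h I w1 w2) = W3.L0 (mode h I w1 w2) := rfl
  rw [Nat.cast_one] at hsum
  rw [Int.cast_one, hsum, sub_eq_iff_eq_add, hL3] at hT
  simp only [sum_range_succ, sum_range_zero, Nat.cast_zero, Nat.cast_one, mode_derivative, hL1, hL2,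
    zero_add, sub_zero, map_smul, LinearMap.smul_apply, add_sub_cancel_left, Nat.choose_self,
    Nat.choose_zero_right, one_smul] at hT
  rw [WeakModule.mem_eig, hT]
  module

theorem isStable_span_mode (w2 : W2.carrier) :
    W3.IsStable (Submodule.span ℂ {x | ∃ w1 h, x = mode h I w1 w2}) := by
  refine WeakModule.isStable_span ?_
  rintro u n _ ⟨w1, h, rfl⟩
  have hmem := WeakModule.mode_mem_of_eventually_sum_mem (W := W3.toWeakModule)
    (S := Submodule.span ℂ {x | ∃ w1 h, x = mode h I w1 w2}) (u := u)
    (eventually_mode_eq_zero I w1 w2 h) (fun j p => ?_) 0 n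
  · simpa using hmem
  obtain ⟨m, hm⟩ := W2.trunc u w2
  refine ⟨fun i => (-1) ^ i * cchoose (p - m) i, by simp, ?_⟩
  filter_upwards [eventually_borcherds I u w1 w2 (p - m) m (h + j)] with T hT
  have hzero (i : ℕ) : W2.mode (m + i) u w2 = 0 := hm _ (by omega)
  simp only [hzero, map_zero, smul_zero, sub_zero, sub_add_cancel, add_assoc h] at hT
  push_cast
  rw [← hT]
  exact sum_mem fun i _ => Submodule.smul_mem _ _ (Submodule.subset_span ⟨_, _, rfl⟩)

theorem isStable_iInf_ker_mode :
    W2.IsStable (⨅ (w1 : W1.carrier) (h : ℂ), LinearMap.ker (mode h I w1)) := by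
  intro u m w2 hw2
  simp only [Submodule.mem_iInf, LinearMap.mem_ker] at hw2 ⊢
  intro w1 h
  rw [← WeakModule.mode_apply]
  obtain ⟨T, hT⟩ := (eventually_mode_comm I u w1 w2 m h).exists
  simpa only [hw2, map_zero, smul_zero, sum_const_zero, zero_sub, neg_eq_zero] using hT

theorem eq_zero_of_mode_apply_eq_zero (hW2 : W2.IsIrreducible) {w2 : W2.carrier} (hw2 : w2 ≠ 0)
    (hI : ∀ w1 h, mode h I w1 w2 = 0) : I = 0 := by
  have htop := (hW2.2 _ (isStable_iInf_ker_mode I)).resolve_left fun hbot => hw2 <| by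
    rw [← Submodule.mem_bot ℂ, ← hbot]
    simpa only [Submodule.mem_iInf, LinearMap.mem_ker] using hI
  simp only [iInf_eq_top, LinearMap.ker_eq_top] at htop
  exact eq_zero_of_mode_eq_zero I fun h => LinearMap.ext fun w1 => htop w1 h

theorem mode_apply_eq_zero_of_proj_eq_zero (hW3 : W3.IsIrreducible) {w2 : W2.carrier} {h3 : ℂ}
    (hne : W3.eig h3 ≠ ⊥) (hI : ∀ w1 h, W3.isOrdinary.proj h3 (mode h I w1 w2) = 0)
    (w1 : W1.carrier) (h : ℂ) : mode h I w1 w2 = 0 := by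
  have hle : Submodule.span ℂ {x | ∃ w1 h, x = mode h I w1 w2}
      ≤ LinearMap.ker (W3.isOrdinary.proj h3) := by
    refine Submodule.span_le.2 ?_
    rintro _ ⟨w1, h, rfl⟩
    exact hI w1 h
  have hbot := (hW3.2 _ (isStable_span_mode I w2)).resolve_right fun htop => hne <| by
    refine (Submodule.eq_bot_iff _).2 fun w3 hw3 => ?_
    have hproj : W3.isOrdinary.proj h3 w3 = 0 := hle (htop ▸ Submodule.mem_top)
    simpa only [WeakModule.IsOrdinary.proj_apply_of_mem _ hw3, Submodule.mk_eq_zero] using hproj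
  rw [← Submodule.mem_bot ℂ, ← hbot]
  exact Submodule.subset_span ⟨w1, h, rfl⟩

/-- The coefficient of an intertwining operator which, for `w₂` of weight `h₂`, takes values in the
weight space of weight `h₃`: on `w₁` of weight `g` it is `(w₁)_{g + h₂ - h₃ - 1} w₂`. -/
def coeff (h2 h3 : ℂ) (w2 : W2.carrier) :
    intertwinerSpace W1 W2 W3 →ₗ[ℂ] W1.carrier →ₗ[ℂ] W3.eig h3 :=
  (linearMapEquivOfIndep W1.iSupIndep_eig W1.isOrdinary.iSup_eig).toLinearMap ∘ₗ
    LinearMap.pi fun g => LinearMap.compRight ℂ (W3.isOrdinary.proj h3) ∘ₗ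
      LinearMap.lcomp ℂ W3.carrier (W1.eig g).subtype ∘ₗ
        LinearMap.applyₗ w2 ∘ₗ LinearMap.lflip.toLinearMap ∘ₗ mode (g + h2 - h3 - 1)

theorem coeff_apply_of_mem {g : ℂ} {w1 : W1.carrier} (hw1 : w1 ∈ W1.eig g) (h2 h3 : ℂ)
    (w2 : W2.carrier) :
    coeff h2 h3 w2 I w1 = W3.isOrdinary.proj h3 (mode (g + h2 - h3 - 1) I w1 w2) :=
  linearMapEquivOfIndep_apply_of_mem _ _ _ hw1

theorem proj_mode_eq_zero_of_coeff_eq_zero {h2 h3 : ℂ} {w2 : W2.carrier} (hw2 : w2 ∈ W2.eig h2)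
    (hI : coeff h2 h3 w2 I = 0) (w1 : W1.carrier) (h : ℂ) :
    W3.isOrdinary.proj h3 (mode h I w1 w2) = 0 := by
  induction w1 using W1.isOrdinary.induction_on_homogeneous with
  | add x y hx hy => rw [map_add, LinearMap.add_apply, map_add, hx, hy, add_zero]
  | homogeneous g w1 hw1 =>
    by_cases hg : g + h2 - h - 1 = h3
    · rw [show h = g + h2 - h3 - 1 by rw [← hg]; ring, ← coeff_apply_of_mem I hw1, hI,
        LinearMap.zero_apply]
    · exact W3.isOrdinary.proj_apply_of_ne hg (mode_mem_eig I hw1 hw2 h)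

/-- The Borcherds identity with `l = -2` and `m = wt u`: all terms on its right-hand side
have weight below `h₂` or `h₃`. -/
theorem OW_le_ker_coeff {h2 h3 : ℂ} {w2 : W2.carrier} (hw2 : w2 ∈ W2.eig h2)
    (hlow2 : ∀ i : ℕ, W2.eig (h2 - (i + 1)) = ⊥) (hlow3 : ∀ i : ℕ, W3.eig (h3 - (i + 1)) = ⊥) :
    W1.OW ≤ LinearMap.ker (coeff h2 h3 w2 I) := by
  refine W1.isOrdinary.OW_le fun k u hu g w1 hw1 => ?_
  filter_upwards [eventually_borcherds I u w1 w2 (-2) k (g + h2 - h3)] with T hT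
  have hzero3 (i : ℕ) : mode (g + h2 - h3 + i) I w1 w2 = 0 := by
    rw [← Submodule.mem_bot ℂ, ← hlow3 i]
    convert mode_mem_eig I hw1 hw2 (g + h2 - h3 + i) using 2
    ring
  have hzero2 (i : ℕ) : W2.mode (k + i) u w2 = 0 := by
    rw [← Submodule.mem_bot ℂ, ← hlow2 i]
    convert WeakModule.mode_mem_eig hu (k + i) hw2 using 2
    push_cast
    ring
  simp only [hzero2, hzero3, map_zero, smul_zero, sub_zero, sum_const_zero] at hT
  rw [LinearMap.mem_ker, map_sum, ← map_zero (W3.isOrdinary.proj h3), ← hT, map_sum]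
  refine sum_congr rfl fun i _ => ?_
  rw [map_smul, map_smul, coeff_apply_of_mem I (WeakModule.mode_mem_eig hu (-2 + i) hw1)]
  congr 6
  push_cast
  ring

end intertwinerSpace

theorem VOA.classA.fusionFinite (hV : V.classA) (hW2 : W2.IsIrreducible)
    (hW3 : W3.IsIrreducible) : FusionFinite W1 W2 W3 := by
  obtain ⟨h2, hne2, hlow2⟩ := W2.isOrdinary.exists_lowest_weight hW2.1
  obtain ⟨h3, hne3, hlow3⟩ := W3.isOrdinary.exists_lowest_weight hW3.1
  obtain ⟨w2, hw2, hw2_ne⟩ := Submodule.exists_mem_ne_zero_of_ne_bot hne2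
  have := W1.isOrdinary.finiteDimensional_quotient_OW hV
  have := W3.isOrdinary.finiteDimensional_eig h3
  refine fusionFinite_iff.2 (finiteDimensional_of_injective_of_le_ker
    (f := intertwinerSpace.coeff h2 h3 w2) ?_
    fun I => intertwinerSpace.OW_le_ker_coeff I hw2 hlow2 hlow3)
  refine (injective_iff_map_eq_zero _).2 fun I hI => ?_
  have hproj := intertwinerSpace.proj_mode_eq_zero_of_coeff_eq_zero I hw2 hI
  exact intertwinerSpace.eq_zero_of_mode_apply_eq_zero I hW2 hw2_ne
    (intertwinerSpace.mode_apply_eq_zero_of_proj_eq_zero I hW3 hne3 hproj)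

end Intertwiner

/-! ### Finiteness of the set of irreducible modules -/

namespace WeakModule

variable {V : VOA}

/-- The submodule generated by a vector. Products of modes need not be listed, since the Borcherds
identity rewrites them as combinations of single modes. -/
def cyclic (W : WeakModule V) (w : W.carrier) : Submodule ℂ W.carrier :=
  Submodule.span ℂ {x | ∃ v n, x = W.mode n v w}

theorem isStable_cyclic (W : WeakModule V) (w : W.carrier) : W.IsStable (W.cyclic w) := by
  refine isStable_span ?_
  rintro u n _ ⟨v, q, rfl⟩
  have hmem := mode_mem_of_eventually_sum_mem (S := W.cyclic w) (u := u)
    (W.eventually_mode_eq_zero v w q) (fun j p => ?_) 0 n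
  · simpa [cyclic] using hmem
  obtain ⟨m, hm⟩ := W.trunc u w
  refine ⟨fun i => (-1) ^ i * cchoose (p - m) i, by simp, ?_⟩
  filter_upwards [W.eventually_borcherds u v w (p - m) m (q + j)] with T hT
  have hzero (i : ℕ) : W.mode (m + i) u w = 0 := hm _ (by omega)
  simp only [hzero, map_zero, smul_zero, sub_zero, sub_add_cancel, add_assoc q] at hT
  push_cast
  rw [← hT]
  exact sum_mem fun i _ => Submodule.smul_mem _ _ (Submodule.subset_span ⟨_, _, rfl⟩)

theorem mem_cyclic_self (W : WeakModule V) (w : W.carrier) : w ∈ W.cyclic w :=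
  Submodule.subset_span ⟨V.one, -1, ((W.one_op (-1) w).trans (if_pos rfl)).symm⟩

/-- The product of a finite family of weak modules. -/
@[reducible] def pi {ι : Type} [Finite ι] (M : ι → WeakModule V) : WeakModule V where
  carrier := ∀ i, (M i).carrier
  op v n x i := (M i).op v n (x i)
  op_linear_left n w := (LinearMap.pi fun i => ((M i).mode n).flip (w i)).isLinear
  op_linear_right u n := (LinearMap.pi fun i => (M i).mode n u ∘ₗ LinearMap.proj i).isLinear
  trunc u w := by
    choose N hN using fun i => (M i).trunc u (w i)
    obtain ⟨B, hB⟩ := Finite.exists_le N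
    exact ⟨B, fun n hn => funext fun i => hN i n ((hB i).trans hn)⟩
  one_op n w := funext fun i => by rw [(M i).one_op]; split_ifs <;> rfl
  borcherds u v w l m n := by
    refine (finsum_eq_finsum_iff_eventually ?_ ?_).2 ?_
    · filter_upwards [V.eventually_mode_eq_zero u v l] with j hj
      ext i
      change cchoose m j • (M i).mode _ (V.mode (l + j) u v) (w i) = 0
      rw [hj, map_zero, LinearMap.zero_apply, smul_zero]
    · filter_upwards [eventually_all.2 fun i => (M i).eventually_mode_eq_zero v (w i) n,
        eventually_all.2 fun i => (M i).eventually_mode_eq_zero u (w i) m] with j hv hu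
      ext i
      change ((-1 : ℂ) ^ j * cchoose l j) • ((M i).mode _ u ((M i).mode (n + j) v (w i))
        - ((-1 : ℂ) ^ l) • (M i).mode _ v ((M i).mode (m + j) u (w i))) = 0
      rw [hv, hu, map_zero, map_zero, smul_zero, sub_zero, smul_zero]
    · filter_upwards [eventually_all.2 fun i => (M i).eventually_borcherds u v (w i) l m n]
        with T hT
      ext i
      simpa only [Finset.sum_apply, Pi.smul_apply, Pi.sub_apply, mode_apply, VOA.mode_apply] using
        hT i

section Homomorphisms

variable {M N P : WeakModule V}

/-- The linear map `f` commutes with all modes, i.e. is a homomorphism of weak modules. -/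
def IsHom (f : M.carrier →ₗ[ℂ] N.carrier) : Prop :=
  ∀ v n w, f (M.mode n v w) = N.mode n v (f w)

theorem IsStable.inf {S T : Submodule ℂ M.carrier} (hS : M.IsStable S) (hT : M.IsStable T) :
    M.IsStable (S ⊓ T) :=
  fun v n w hw => ⟨hS v n w hw.1, hT v n w hw.2⟩

theorem IsStable.map {S : Submodule ℂ M.carrier} (hS : M.IsStable S)
    {f : M.carrier →ₗ[ℂ] N.carrier} (hf : IsHom f) : N.IsStable (S.map f) := by
  rintro v n _ ⟨w, hw, rfl⟩
  exact ⟨M.mode n v w, hS v n w hw, hf v n w⟩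

theorem IsHom.isStable_ker {f : M.carrier →ₗ[ℂ] N.carrier} (hf : IsHom f) :
    M.IsStable (LinearMap.ker f) := by
  intro v n w hw
  rw [LinearMap.mem_ker] at hw ⊢
  rw [← mode_apply, hf, hw, map_zero]

theorem Equiv.symm (h : Equiv M N) : Equiv N M := by
  obtain ⟨e, he⟩ := h
  refine ⟨e.symm, fun v n w => e.injective ?_⟩
  rw [he, e.apply_symm_apply, e.apply_symm_apply]

theorem IsHom.equiv_of_ne_zero (hM : M.IsIrreducible) (hN : N.IsIrreducible)
    {f : M.carrier →ₗ[ℂ] N.carrier} (hf : IsHom f) (hne : f ≠ 0) : Equiv M N := by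
  have hker : LinearMap.ker f = ⊥ := (hM.2 _ hf.isStable_ker).resolve_right
    fun htop => hne (LinearMap.ker_eq_top.1 htop)
  have hrange : LinearMap.range f = ⊤ := by
    rw [← Submodule.map_top]
    refine (hN.2 _ (IsStable.map (fun _ _ _ _ => Submodule.mem_top) hf)).resolve_left
      fun hbot => hne ?_
    rwa [Submodule.map_top, LinearMap.range_eq_bot] at hbot
  exact ⟨.ofBijective f ⟨LinearMap.ker_eq_bot.1 hker, LinearMap.range_eq_top.1 hrange⟩, hf⟩

/-- Otherwise `S` would, as in Goursat's lemma, be the graph of a nonzero homomorphism `N → M`. -/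
theorem IsStable.exists_mem_eq_and_eq_zero (hM : M.IsIrreducible) (hN : N.IsIrreducible)
    (hne : ¬ Equiv M N) {f : P.carrier →ₗ[ℂ] M.carrier} (hf : IsHom f)
    {g : P.carrier →ₗ[ℂ] N.carrier} (hg : IsHom g) {S : Submodule ℂ P.carrier}
    (hS : P.IsStable S) {y : P.carrier} (hy : y ∈ S) : ∃ z ∈ S, f z = f y ∧ g z = 0 := by
  rcases hM.2 _ ((hS.inf hg.isStable_ker).map hf) with hbot | htop
  · have hker (x : P.carrier) (hxS : x ∈ S) (hx : g x = 0) : f x = 0 := by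
      rw [← Submodule.mem_bot ℂ, ← hbot]
      exact ⟨x, ⟨hxS, hx⟩, rfl⟩
    suffices hfy : f y = 0 from ⟨0, zero_mem S, by rw [map_zero, hfy], map_zero g⟩
    rcases hN.2 _ (hS.map hg) with hbot' | htop'
    · exact hker y hy ((Submodule.mem_bot ℂ).1 (hbot' ▸ Submodule.mem_map_of_mem hy))
    obtain ⟨s, hs⟩ := (g.domRestrict S).exists_rightInverse_of_surjective
      (by rw [LinearMap.range_domRestrict, htop'])
    have hgs (x : N.carrier) : g (s x) = x := LinearMap.congr_fun hs x
    let q : N.carrier →ₗ[ℂ] M.carrier := f ∘ₗ S.subtype ∘ₗ s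
    have hq (x : P.carrier) (hx : x ∈ S) : q (g x) = f x := by
      rw [← sub_eq_zero]
      refine (map_sub f _ _).symm.trans (hker _ (sub_mem (s (g x)).2 hx) ?_)
      rw [map_sub, sub_eq_zero]
      exact hgs (g x)
    have hqhom : IsHom q := fun v n x => by
      calc q (N.mode n v x) = q (g (P.mode n v (s x))) := by rw [hg, hgs]
        _ = f (P.mode n v (s x)) := hq _ (hS v n _ (s x).2)
        _ = M.mode n v (q x) := hf v n (s x)
    by_contra hfy
    refine hne (hqhom.equiv_of_ne_zero hN hM fun hzero => hfy ?_).symm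
    rw [← hq y hy, hzero, LinearMap.zero_apply]
  · obtain ⟨z, ⟨hzS, hz⟩, hzy⟩ : f y ∈ (S ⊓ LinearMap.ker g).map f := htop ▸ Submodule.mem_top
    exact ⟨z, hzS, hzy, hz⟩

end Homomorphisms

section Pi

variable {ι : Type} [Finite ι] {M : ι → WeakModule V}

theorem isHom_proj (i : ι) :
    IsHom (M := pi M) (N := M i) (LinearMap.proj i : (∀ i, (M i).carrier) →ₗ[ℂ] (M i).carrier) :=
  fun _ _ _ => rfl

theorem IsStable.single_mem [DecidableEq ι] (hM : ∀ i, (M i).IsIrreducible)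
    (hne : Pairwise fun i j => ¬ Equiv (M i) (M j)) {S : Submodule ℂ (pi M).carrier}
    (hS : (pi M).IsStable S) {w : (pi M).carrier} (hw : w ∈ S) (i : ι) :
    Pi.single i (w i) ∈ S := by
  have hclear (s : Finset ι) (hi : i ∉ s) : ∃ z ∈ S, z i = w i ∧ ∀ j ∈ s, z j = 0 := by
    induction s using Finset.induction_on with
    | empty => exact ⟨w, hw, rfl, by simp⟩
    | insert a s _ ih =>
      rw [mem_insert, not_or] at hi
      obtain ⟨y, hyS, hyi, hy⟩ := ih hi.2
      let T : Submodule ℂ (pi M).carrier :=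
        ⨅ j ∈ s, LinearMap.ker (LinearMap.proj j : (∀ i, (M i).carrier) →ₗ[ℂ] (M j).carrier)
      have hmem {x : (pi M).carrier} : x ∈ T ↔ ∀ j ∈ s, x j = 0 := by
        simp only [T, Submodule.mem_iInf, LinearMap.mem_ker, LinearMap.proj_apply]
      have hT : (pi M).IsStable T := fun v n x hx => hmem.2 fun j hj =>
        (isHom_proj j).isStable_ker v n x (hmem.1 hx j hj)
      obtain ⟨z, ⟨hzS, hzT⟩, hzi, hza⟩ := (hS.inf hT).exists_mem_eq_and_eq_zero (hM i) (hM a)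
        (hne hi.1) (isHom_proj i) (isHom_proj a) ⟨hyS, hmem.2 hy⟩
      exact ⟨z, hzS, hzi.trans hyi, forall_mem_insert _ _ _ |>.2 ⟨hza, hmem.1 hzT⟩⟩
  have := Fintype.ofFinite ι
  obtain ⟨z, hzS, hzi, hz⟩ := hclear (univ.erase i) (notMem_erase i univ)
  convert hzS
  refine funext fun j => ?_
  obtain rfl | hj := eq_or_ne j i
  · rw [Pi.single_eq_same, hzi]
  · rw [Pi.single_eq_of_ne hj, hz j (mem_erase.2 ⟨hj, mem_univ j⟩)]

end Pi

/-- The vector `w` behaves like one in the lowest degree of an `ℕ`-graded module, and the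
functional `φ` like one vanishing in all other degrees. -/
structure IsLowestPair (W : WeakModule V) (w : W.carrier) (φ : W.carrier →ₗ[ℂ] ℂ) : Prop where
  mode_eq_zero : ∀ k, ∀ u ∈ V.wtSpace k, ∀ n, k ≤ n → W.mode n u w = 0
  apply_mode_eq_zero : ∀ k, ∀ u ∈ V.wtSpace k, ∀ n, n ≠ k - 1 → φ (W.mode n u w) = 0

/-- The functional on `V` sending `v` of weight `k` to the matrix coefficient `φ(v_{k-1} w)` of its
zero mode. -/
def zeroModeCoeff (W : WeakModule V) (w : W.carrier) (φ : W.carrier →ₗ[ℂ] ℂ) :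
    V.carrier →ₗ[ℂ] ℂ :=
  linearMapEquivOfIndep V.iSupIndep_wtSpace V.iSup_wtSpace fun k =>
    φ ∘ₗ (W.mode (k - 1)).flip w ∘ₗ (V.wtSpace k).subtype

theorem zeroModeCoeff_apply_of_mem {W : WeakModule V} (w : W.carrier) (φ : W.carrier →ₗ[ℂ] ℂ)
    {k : ℤ} {v : V.carrier} (hv : v ∈ V.wtSpace k) :
    W.zeroModeCoeff w φ v = φ (W.mode (k - 1) v w) :=
  linearMapEquivOfIndep_apply_of_mem _ _ _ hv

namespace IsLowestPair

variable {W : WeakModule V} {w : W.carrier} {φ : W.carrier →ₗ[ℂ] ℂ}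

theorem OW_le_ker_zeroModeCoeff (h : W.IsLowestPair w φ) :
    V.adjoint.OW ≤ LinearMap.ker (W.zeroModeCoeff w φ) := by
  refine V.adjoint_isOrdinary.OW_le fun k u hu g v hv => ?_
  by_cases hg : ∃ n : ℤ, (n : ℂ) = g
  swap
  · rw [V.adjoint_eig_eq_bot (not_exists.1 hg), Submodule.mem_bot] at hv
    exact .of_forall fun T => by simp only [hv, map_zero, smul_zero, sum_const_zero, zero_mem]
  obtain ⟨n, rfl⟩ := hg
  rw [V.adjoint_eig_intCast] at hv
  filter_upwards [W.eventually_borcherds u v w (-2) k n] with T hT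
  have hu0 (i : ℕ) : W.mode (k + i) u w = 0 := h.mode_eq_zero k u hu _ (by omega)
  have hv0 (i : ℕ) : W.mode (n + i) v w = 0 := h.mode_eq_zero n v hv _ (by omega)
  simp only [hu0, hv0, map_zero, smul_zero, sub_zero, sum_const_zero] at hT
  rw [LinearMap.mem_ker, map_sum, ← map_zero φ, ← hT, map_sum]
  refine sum_congr rfl fun i _ => ?_
  rw [map_smul, map_smul]
  refine congrArg _ ((zeroModeCoeff_apply_of_mem w φ (V.op_wt k n (-2 + i) u hu v hv)).trans ?_)
  rw [show k + n - (-2 + (i : ℤ)) - 1 - 1 = k + n - i by ring]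
  rfl

theorem cyclic_le_ker (h : W.IsLowestPair w φ) (hzero : W.zeroModeCoeff w φ = 0) :
    W.cyclic w ≤ LinearMap.ker φ := by
  refine Submodule.span_le.2 ?_
  rintro _ ⟨v, n, rfl⟩
  change φ (W.mode n v w) = 0
  induction v using VOA.induction_on_homogeneous with
  | add u v hu hv => rw [map_add, LinearMap.add_apply, map_add, hu, hv, add_zero]
  | homogeneous k v hv =>
    by_cases hn : n = k - 1
    · rw [hn, ← zeroModeCoeff_apply_of_mem w φ hv, hzero, LinearMap.zero_apply]
    · exact h.apply_mode_eq_zero k v hv n hn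

end IsLowestPair

section Independence

variable {ι : Type} {M : ι → WeakModule V} {w : ∀ i, (M i).carrier}
  {φ : ∀ i, (M i).carrier →ₗ[ℂ] ℂ}

theorem IsLowestPair.pi [Fintype ι] (h : ∀ i, (M i).IsLowestPair (w i) (φ i)) (c : ι → ℂ) :
    (pi M).IsLowestPair w (∑ i, c i • φ i ∘ₗ LinearMap.proj i) where
  mode_eq_zero k u hu n hn := funext fun i => (h i).mode_eq_zero k u hu n hn
  apply_mode_eq_zero k u hu n hn := by
    rw [LinearMap.sum_apply]
    refine sum_eq_zero fun i _ => ?_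
    change c i • φ i ((M i).mode n u (w i)) = 0
    rw [(h i).apply_mode_eq_zero k u hu n hn, smul_zero]

theorem zeroModeCoeff_pi [Fintype ι] (c : ι → ℂ) :
    (pi M).zeroModeCoeff w (∑ i, c i • φ i ∘ₗ LinearMap.proj i)
      = ∑ i, c i • (M i).zeroModeCoeff (w i) (φ i) := by
  ext v
  induction v using VOA.induction_on_homogeneous with
  | add u v hu hv => rw [map_add, map_add, hu, hv]
  | homogeneous k v hv =>
    rw [zeroModeCoeff_apply_of_mem _ _ hv, LinearMap.sum_apply, LinearMap.sum_apply]
    refine sum_congr rfl fun i _ => ?_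
    rw [LinearMap.smul_apply, LinearMap.smul_apply, zeroModeCoeff_apply_of_mem _ _ hv]
    rfl

theorem linearIndependent_zeroModeCoeff [Finite ι] (hM : ∀ i, (M i).IsIrreducible)
    (hne : Pairwise fun i j => ¬ Equiv (M i) (M j))
    (h : ∀ i, (M i).IsLowestPair (w i) (φ i)) (hφ : ∀ i, φ i (w i) ≠ 0) :
    LinearIndependent ℂ fun i => (M i).zeroModeCoeff (w i) (φ i) := by
  classical
  have := Fintype.ofFinite ι
  refine Fintype.linearIndependent_iff.2 fun c hc i => ?_
  have hker := (IsLowestPair.pi h c).cyclic_le_ker ((zeroModeCoeff_pi c).trans hc)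
  have hsingle := hker <|
    ((pi M).isStable_cyclic w).single_mem hM hne ((pi M).mem_cyclic_self w) i
  rw [LinearMap.mem_ker, LinearMap.sum_apply, sum_eq_single_of_mem i (mem_univ i)] at hsingle
  · rw [LinearMap.smul_apply, LinearMap.comp_apply, LinearMap.proj_apply,
      Pi.single_eq_same] at hsingle
    exact (smul_eq_zero.1 hsingle).resolve_right (hφ i)
  · intro j _ hj
    rw [LinearMap.smul_apply, LinearMap.comp_apply, LinearMap.proj_apply, Pi.single_eq_of_ne hj,
      map_zero, smul_zero]

end Independence

end WeakModule

theorem NGradedModule.exists_isLowestPair {V : VOA} (M : NGradedModule V)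
    (hne : (⊥ : Submodule ℂ M.carrier) ≠ ⊤) :
    ∃ w φ, M.toWeakModule.IsLowestPair w φ ∧ φ w ≠ 0 := by
  have hgr : ∃ n, M.gr n ≠ ⊥ := by
    by_contra! hbot
    exact hne (by rw [← M.gr_sup, iSup_congr hbot, iSup_bot])
  obtain ⟨d, hd, hlow⟩ := Int.exists_least_of_bdd (P := fun n => M.gr n ≠ ⊥)
    ⟨0, fun n hn => not_lt.1 fun hneg => hn (M.gr_neg n hneg)⟩ hgr
  obtain ⟨w, hw, hw0⟩ := Submodule.exists_mem_ne_zero_of_ne_bot hd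
  obtain ⟨φ, hφw, hφ⟩ := Submodule.exists_le_ker_of_notMem
    fun hmem => hw0 (Submodule.disjoint_def.1 (M.gr_indep d) w hw hmem)
  refine ⟨w, φ, ⟨fun k u hu n hn => ?_, fun k u hu n hn => ?_⟩, hφw⟩
  · have hbot : M.gr (k + d - n - 1) = ⊥ := not_not.1 fun h => by have := hlow _ h; omega
    exact (Submodule.mem_bot ℂ).1 (hbot ▸ M.gr_op k u hu n d w hw)
  · exact hφ (le_iSup₂_of_le (f := fun m (_ : m ≠ d) => M.gr m) (k + d - n - 1) (by omega) le_rfl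
      (M.gr_op k u hu n d w hw))

namespace VOA

variable {V : VOA}

theorem classA.card_le_finrank (hV : V.classA) {ι : Type} [Fintype ι] {M : ι → NGradedModule V}
    (hM : ∀ i, (M i).IsIrreducible)
    (hne : Pairwise fun i j => ¬ WeakModule.Equiv (M i).toWeakModule (M j).toWeakModule) :
    Fintype.card ι ≤ Module.finrank ℂ (V.carrier ⧸ V.adjoint.OW) := by
  have := V.adjoint_isOrdinary.finiteDimensional_quotient_OW hV
  choose w φ h hφ using fun i => (M i).exists_isLowestPair (hM i).1
  have hind := WeakModule.linearIndependent_zeroModeCoeff hM hne h hφ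
  rw [← Subspace.dual_finrank_eq]
  refine LinearIndependent.fintype_card_le_finrank
    (b := fun i => V.adjoint.OW.liftQ _ (h i).OW_le_ker_zeroModeCoeff) ?_
  exact .of_comp V.adjoint.OW.mkQ.dualMap hind

theorem classA.exists_fin_irreducibles (hV : V.classA) :
    ∃ (k : ℕ) (Ms : Fin k → NGradedModule V), ∀ M : NGradedModule V, M.IsIrreducible →
      ∃ i, WeakModule.Equiv M.toWeakModule (Ms i).toWeakModule := by
  by_contra! hno
  have : Std.Symm fun M N : NGradedModule V => ¬ WeakModule.Equiv M.toWeakModule N.toWeakModule :=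
    ⟨fun _ _ h h' => h h'.symm⟩
  obtain ⟨f, hf, hne⟩ := exists_seq_of_forall_finset_exists'
    (fun M : NGradedModule V => M.IsIrreducible)
    (fun M N => ¬ WeakModule.Equiv M.toWeakModule N.toWeakModule) fun s _ => by
      obtain ⟨M, hM, hne⟩ := hno s.card fun i => s.equivFin.symm i
      refine ⟨M, hM, fun N hN h => hne (s.equivFin ⟨N, hN⟩) ?_⟩
      simpa using h.symm
  have hcard := hV.card_le_finrank
    (M := fun i : Fin (Module.finrank ℂ (V.carrier ⧸ V.adjoint.OW) + 1) => f i)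
    (fun i => hf i) fun i j hij => hne (Fin.val_ne_of_ne hij)
  rw [Fintype.card_fin] at hcard
  omega

theorem regular.classA (hV : V.regular) : V.classA := by
  intro M
  obtain ⟨ι, S, hS, -, htop⟩ := hV M
  rw [eq_top_iff, ← htop]
  exact iSup_le fun i => (hS i).2.1.trans (iSup_mono fun _ => inf_le_left)

end VOA

theorem finitely_many_irreducibles_and_finite_fusion_general (V : VOA) (hV : V.classA) :
    (∃ (k : ℕ) (Ms : Fin k → NGradedModule V),
      ∀ M : NGradedModule V, M.toWeakModule.IsIrreducible →
        ∃ i : Fin k, WeakModule.Equiv M.toWeakModule (Ms i).toWeakModule) ∧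
    (∀ W1 W2 W3 : OrdModule V,
      W2.toGenModule.toWeakModule.IsIrreducible →
      W3.toGenModule.toWeakModule.IsIrreducible →
      FusionFinite W1 W2 W3) :=
  ⟨hV.exists_fin_irreducibles, fun _ _ _ => hV.fusionFinite⟩

end

/-- If `V` is of class 𝒜, then `V` has only finitely many
inequivalent irreducible ℕ-gradable weak `V`-modules, and for any three irreducible
`V`-modules `W₁, W₂, W₃` the fusion rule `dim I(W₃; W₁W₂)` is finite.  In particular
both conclusions hold when `V` is regular. -/
theorem finitely_many_irreducibles_and_finite_fusion (V : VOA) :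
    (V.classA →
      (∃ (k : ℕ) (Ms : Fin k → NGradedModule V),
        ∀ M : NGradedModule V, M.toWeakModule.IsIrreducible →
          ∃ i : Fin k, WeakModule.Equiv M.toWeakModule (Ms i).toWeakModule) ∧
      (∀ W1 W2 W3 : OrdModule V,
        W1.toGenModule.toWeakModule.IsIrreducible →
        W2.toGenModule.toWeakModule.IsIrreducible →
        W3.toGenModule.toWeakModule.IsIrreducible →
        FusionFinite W1 W2 W3)) ∧
    (V.regular →
      (∃ (k : ℕ) (Ms : Fin k → NGradedModule V),
        ∀ M : NGradedModule V, M.toWeakModule.IsIrreducible →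
          ∃ i : Fin k, WeakModule.Equiv M.toWeakModule (Ms i).toWeakModule) ∧
      (∀ W1 W2 W3 : OrdModule V,
        W1.toGenModule.toWeakModule.IsIrreducible →
        W2.toGenModule.toWeakModule.IsIrreducible →
        W3.toGenModule.toWeakModule.IsIrreducible →
        FusionFinite W1 W2 W3)) :=
  have general (hV : V.classA) := finitely_many_irreducibles_and_finite_fusion_general V hV
  ⟨fun hV => ⟨(general hV).1, fun W1 W2 W3 _ => (general hV).2 W1 W2 W3⟩,
    fun hV => ⟨(general hV.classA).1, fun W1 W2 W3 _ => (general hV.classA).2 W1 W2 W3⟩⟩
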